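/- (Lemma 2.3, explicit form in type A_n) Let 𝔤 be of type A_n, so r = n(n+1)/2, l = n, and the first n indices of 𝐣 are (j_1,…,j_n) = (1,2,…,n). Let 𝐜 ∈ ℕ^r with c_k = 0 for all k > n. Then the monomial E_{α_1}^{(k_1)} E_{α_2}^{(k_2)} ⋯ E_{α_n}^{(k_n)} with k_i = c_n + c_{n−1} + ⋯ + c_{n−i+1} equals E_𝐜 + ∑_{𝐝 > 𝐜 (lex)} ξ_𝐝 E_𝐝 with ξ_𝐝 ∈ ℤ[q,q^{-1}], where E_𝐜 = E_{α_n}^{(c_1)} E_{α_n+α_{n−1}}^{(c_2)} ⋯ E_{α_n+α_{n−1}+⋯+α_1}^{(c_n)} in terms of the PBW root vectors. -/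

import Mathlib

/-!
Common setup for the quantized enveloping algebra `U_q(𝔤)` of Chari–Xi,
"Monomial bases of quantized enveloping algebras".

The base field is `𝔽 = ℚ(q)`, realized as `RatFunc ℚ` with `q = X`.  Given the Cartan matrix
`a : Fin n → Fin n → ℤ` and symmetrizing integers `d : Fin n → ℕ`, the algebra `U = U n a d`
is presented by generators `E i`, `F i`, `K i`, `K i ⁻¹` and the defining relations of
Proposition 1.1 of the paper.  `Uplus` is the subalgebra generated by the `E i`,
`Ediv i m = E i ^ m / [m]_{d i}!` are the divided powers, `𝒜 = ℤ[q,q⁻¹] ⊆ 𝔽`, and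
`UA` is the `𝒜`-subalgebra generated by the divided powers.

Lusztig's braid automorphisms are abstracted as a family `T` of algebra automorphisms,
constrained by the predicate `IsBraid` recording Lusztig's formulas on generators (which
determine `T` uniquely).  For a word `w` (a reduced expression) the PBW root vectors and PBW
monomials are `rootVec T w t m` (`= T_{i₁} ⋯ T_{i_t}(E_{i_{t+1}}^{(m)})`) and
`pbw T w [c₁, …, c_r] = E_{β₁}^{(c₁)} ⋯ E_{β_r}^{(c_r)}`, while
`mono w [c₁, …, c_r] = E_{α_{i₁}}^{(c₁)} ⋯ E_{α_{i_r}}^{(c_r)}` is a monomial in divided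
powers of the Chevalley generators.

The root-lattice combinatorics is handled by `sRefl` (simple reflections acting on
coordinates w.r.t. the simple roots), `rootAt w t` (`= s_{i₁} ⋯ s_{i_t}(α_{i_{t+1}})`) and
`applyWord`; a word is a reduced expression iff all the roots `rootAt w t` are positive
(`IsReducedWord`), and a reduced word represents the longest element `w₀` iff it moreover
sends every simple root to a negative root (`IsLongestWord`).
-/

noncomputable section
namespace ChariXi

/-- The base field `ℚ(q)`. -/
abbrev 𝔽 : Type := RatFunc ℚ

/-- The indeterminate `q`. -/
def qq : 𝔽 := RatFunc.X

/-- The quantum integer `[m]_d = (q^{dm} - q^{-dm})/(q^d - q^{-d})`. -/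
def qInt (dd m : ℕ) : 𝔽 := (qq ^ (dd * m) - qq⁻¹ ^ (dd * m)) / (qq ^ dd - qq⁻¹ ^ dd)

/-- The quantum factorial `[m]_d!`. -/
def qFact (dd : ℕ) : ℕ → 𝔽
  | 0 => 1
  | m + 1 => qInt dd (m + 1) * qFact dd m

/-- The quantum binomial coefficient `[m choose r]_d`. -/
def qBinom (dd m r : ℕ) : 𝔽 := qFact dd m / (qFact dd r * qFact dd (m - r))

/-- `𝒜 = ℤ[q,q⁻¹]` as a subring of `ℚ(q)`. -/
def 𝒜 : Subring 𝔽 := Subring.closure {qq, qq⁻¹}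

/-- `ℤ[q⁻¹]` as a subring of `ℚ(q)`. -/
def 𝒜inv : Subring 𝔽 := Subring.closure {qq⁻¹}

/-- `q⁻¹ ℤ[q⁻¹] ⊆ ℚ(q)`. -/
def qinvZqinv : Set 𝔽 := {x | ∃ y ∈ 𝒜inv, x = qq⁻¹ * y}

/-- Generators of `U_q(𝔤)`. -/
inductive Gen (n : ℕ) : Type
  | E : Fin n → Gen n
  | F : Fin n → Gen n
  | K : Fin n → Gen n
  | Kinv : Fin n → Gen n

variable (n : ℕ)

namespace Fr
/-- `E_{α_i}` in the free algebra. -/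
def E (i : Fin n) : FreeAlgebra 𝔽 (Gen n) := FreeAlgebra.ι 𝔽 (Gen.E i)
/-- `F_{α_i}` in the free algebra. -/
def F (i : Fin n) : FreeAlgebra 𝔽 (Gen n) := FreeAlgebra.ι 𝔽 (Gen.F i)
/-- `K_i` in the free algebra. -/
def K (i : Fin n) : FreeAlgebra 𝔽 (Gen n) := FreeAlgebra.ι 𝔽 (Gen.K i)
/-- `K_i⁻¹` in the free algebra. -/
def Kinv (i : Fin n) : FreeAlgebra 𝔽 (Gen n) := FreeAlgebra.ι 𝔽 (Gen.Kinv i)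
end Fr

variable (a : Fin n → Fin n → ℤ) (d : Fin n → ℕ)

/-- The hypotheses on the Cartan data `(aᵢⱼ)`, `(dᵢ)` of a finite-dimensional complex simple
Lie algebra used in the paper:  `aᵢᵢ = 2`, `aᵢⱼ ≤ 0` for `i ≠ j`, `(dᵢ aᵢⱼ)` is symmetric and
`dᵢ ∈ {1,2,3}`. -/
structure IsCartan : Prop where
  diag : ∀ i, a i i = 2
  offdiag : ∀ i j, i ≠ j → a i j ≤ 0
  symmetrizable : ∀ i j, (d i : ℤ) * a i j = (d j : ℤ) * a j i
  dmem : ∀ i, d i ∈ ({1, 2, 3} : Set ℕ)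

/-- The defining relations of `U_q(𝔤)` (Proposition 1.1 of the paper). -/
inductive Rel : FreeAlgebra 𝔽 (Gen n) → FreeAlgebra 𝔽 (Gen n) → Prop
  | KKinv (i : Fin n) : Rel (Fr.K n i * Fr.Kinv n i) 1
  | KinvK (i : Fin n) : Rel (Fr.Kinv n i * Fr.K n i) 1
  | KK (i j : Fin n) : Rel (Fr.K n i * Fr.K n j) (Fr.K n j * Fr.K n i)
  | KE (i j : Fin n) :
      Rel (Fr.K n i * Fr.E n j) ((qq ^ ((d i : ℤ) * a i j)) • (Fr.E n j * Fr.K n i))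
  | KF (i j : Fin n) :
      Rel (Fr.K n i * Fr.F n j) ((qq ^ (-((d i : ℤ) * a i j))) • (Fr.F n j * Fr.K n i))
  | EF (i j : Fin n) :
      Rel (Fr.E n i * Fr.F n j - Fr.F n j * Fr.E n i)
        (if i = j then (qq ^ (d i) - qq⁻¹ ^ (d i))⁻¹ • (Fr.K n i - Fr.Kinv n i) else 0)
  | serreE (i j : Fin n) (h : i ≠ j) :
      Rel (∑ r ∈ Finset.range ((1 - a i j).toNat + 1),
            ((-1 : 𝔽) ^ r * qBinom (d i) (1 - a i j).toNat r) •
              (Fr.E n i ^ r * Fr.E n j * Fr.E n i ^ ((1 - a i j).toNat - r))) 0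
  | serreF (i j : Fin n) (h : i ≠ j) :
      Rel (∑ r ∈ Finset.range ((1 - a i j).toNat + 1),
            ((-1 : 𝔽) ^ r * qBinom (d i) (1 - a i j).toNat r) •
              (Fr.F n i ^ r * Fr.F n j * Fr.F n i ^ ((1 - a i j).toNat - r))) 0

/-- The quantized enveloping algebra `U_q(𝔤)` over `ℚ(q)`. -/
abbrev U := RingQuot (Rel n a d)

/-- The quotient map. -/
def mk : FreeAlgebra 𝔽 (Gen n) →ₐ[𝔽] U n a d := RingQuot.mkAlgHom 𝔽 (Rel n a d)

/-- The Chevalley generator `E_{α_i}`. -/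
def Eg (i : Fin n) : U n a d := mk n a d (Fr.E n i)
/-- The Chevalley generator `F_{α_i}`. -/
def Fg (i : Fin n) : U n a d := mk n a d (Fr.F n i)
/-- The torus generator `K_i`. -/
def Kg (i : Fin n) : U n a d := mk n a d (Fr.K n i)
/-- The torus generator `K_i⁻¹`. -/
def Kinvg (i : Fin n) : U n a d := mk n a d (Fr.Kinv n i)

/-- The divided power `E_{α_i}^{(m)} = E_{α_i}^m / [m]_{dᵢ}!`. -/
def Ediv (i : Fin n) (m : ℕ) : U n a d := (qFact (d i) m)⁻¹ • Eg n a d i ^ m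
/-- The divided power `F_{α_i}^{(m)}`. -/
def Fdiv (i : Fin n) (m : ℕ) : U n a d := (qFact (d i) m)⁻¹ • Fg n a d i ^ m
/-- Integer powers `K_i^z`. -/
def Kzpow (i : Fin n) (z : ℤ) : U n a d :=
  if 0 ≤ z then Kg n a d i ^ z.toNat else Kinvg n a d i ^ (-z).toNat

/-- `U⁺`, the `ℚ(q)`-subalgebra generated by the `E_{α_i}`. -/
def Uplus : Subalgebra 𝔽 (U n a d) := Algebra.adjoin 𝔽 (Set.range (Eg n a d))

/-- The integral form `U_𝒜⁺`: the `ℤ[q,q⁻¹]`-subalgebra of `U⁺` generated by the divided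
powers `E_{α_i}^{(m)}`. -/
def UA : Subalgebra 𝒜 (U n a d) :=
  Algebra.adjoin 𝒜 {x : U n a d | ∃ i m, x = Ediv n a d i m}

/-- The homogeneous component `U⁺_ν` of `U⁺`:  the span of the monomials in the `E_{α_i}`
in which `i` occurs exactly `ν i` times (extended to integer `ν`, with `U⁺_ν = 0` if some
`ν i < 0`). -/
def wtSpace (ν : Fin n → ℤ) : Submodule 𝔽 (U n a d) :=
  Submodule.span 𝔽
    {x : U n a d | ∃ l : List (Fin n),
      x = (l.map (Eg n a d)).prod ∧ ∀ i, (l.count i : ℤ) = ν i}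

/-- Lusztig's formulas for the braid group operator `Tᵢ` on generators; these determine the
automorphism `Tᵢ` uniquely. -/
structure IsBraid (T : Fin n → U n a d ≃ₐ[𝔽] U n a d) : Prop where
  TEself : ∀ i m, T i (Ediv n a d i m)
      = ((-1 : 𝔽) ^ m * (qq ^ (m * (m - 1)))⁻¹) • (Kinvg n a d i ^ m * Fdiv n a d i m)
  TFself : ∀ i m, T i (Fdiv n a d i m)
      = ((-1 : 𝔽) ^ m * qq ^ (m * (m - 1))) • (Ediv n a d i m * Kg n a d i ^ m)
  TE : ∀ i j m, i ≠ j → T i (Ediv n a d j m)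
      = ∑ s ∈ Finset.range (m * (-(a i j)).toNat + 1),
          ((-1 : 𝔽) ^ s * (qq ^ s)⁻¹) •
            (Ediv n a d i s * Ediv n a d j m * Ediv n a d i (m * (-(a i j)).toNat - s))
  TF : ∀ i j m, i ≠ j → T i (Fdiv n a d j m)
      = ∑ s ∈ Finset.range (m * (-(a i j)).toNat + 1),
          ((-1 : 𝔽) ^ s * qq ^ s) •
            (Fdiv n a d i (m * (-(a i j)).toNat - s) * Fdiv n a d j m * Fdiv n a d i s)
  TK : ∀ i j, T i (Kg n a d j) = Kg n a d j * Kzpow n a d i (-(a i j))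

variable (T : Fin n → U n a d ≃ₐ[𝔽] U n a d)

/-- The PBW root vector `E_{β_{t+1}}^{(m)} = T_{i₁} ⋯ T_{i_t} (E_{α_{i_{t+1}}}^{(m)})`
associated to position `t` (0-based) of the word `w = [i₁, i₂, …]`. -/
def rootVec : List (Fin n) → ℕ → ℕ → U n a d
  | [], _, _ => 1
  | i :: _, 0, m => Ediv n a d i m
  | i :: w, t + 1, m => T i (rootVec w t m)

/-- The PBW monomial `E_𝐜 = E_{β₁}^{(c₁)} ⋯ E_{β_r}^{(c_r)}` for the word `w` and exponent
list `cs`. -/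
def pbw : List (Fin n) → List ℕ → U n a d
  | _, [] => 1
  | [], _ => 1
  | i :: w, c :: cs => Ediv n a d i c * T i (pbw w cs)

/-- The monomial `M_𝐜 = E_{α_{j₁}}^{(c₁)} ⋯ E_{α_{j_r}}^{(c_r)}` in divided powers of the
Chevalley generators, for the word `w = [j₁, …, j_r]`. -/
def mono : List (Fin n) → List ℕ → U n a d
  | _, [] => 1
  | [], _ => 1
  | i :: w, c :: cs => Ediv n a d i c * mono w cs

/-- `d_β` for the root `β` in position `t` of the word `w`: equals `d_{i_{t+1}}`. -/
def dAt : List (Fin n) → ℕ → ℕ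
  | [], _ => 1
  | i :: _, 0 => d i
  | _ :: w, t + 1 => dAt w t

/-- The simple root `α_i` in coordinates. -/
def simpleRoot (i : Fin n) : Fin n → ℤ := fun k => if k = i then 1 else 0

/-- The simple reflection `s_i` acting on the root lattice: `s_i α_j = α_j - a_{ij} α_i`. -/
def sRefl (i : Fin n) (v : Fin n → ℤ) : Fin n → ℤ :=
  fun k => v k - (if k = i then ∑ j, a i j * v j else 0)

/-- The positive root `β_{t+1} = s_{i₁} ⋯ s_{i_t} (α_{i_{t+1}})` associated to position `t`
(0-based) of the word `w`. -/
def rootAt : List (Fin n) → ℕ → (Fin n → ℤ)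
  | [], _ => 0
  | i :: _, 0 => simpleRoot n i
  | i :: w, t + 1 => sRefl n a i (rootAt w t)

/-- The action of the word `w = [i₁, …, i_r]`, i.e. of `s_{i₁} ⋯ s_{i_r}`, on the root
lattice. -/
def applyWord : List (Fin n) → (Fin n → ℤ) → (Fin n → ℤ)
  | [], v => v
  | i :: w, v => sRefl n a i (applyWord w v)

/-- A word is a reduced expression iff all the associated roots `β_t` are positive. -/
def IsReducedWord (w : List (Fin n)) : Prop :=
  ∀ t < w.length, ∀ i, 0 ≤ rootAt n a w t i

/-- A word is a reduced expression of the longest element `w₀` iff it is reduced and sends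
every simple root to a negative root. -/
def IsLongestWord (w : List (Fin n)) : Prop :=
  IsReducedWord n a w ∧ ∀ i j, applyWord n a w (simpleRoot n i) j ≤ 0

/-- Strict lexicographic order on `ℕ^r`, with `(1,0,…,0) > (0,1,…,0) > ⋯ > (0,…,0,1)`:
`c < e` iff at the first index where they differ, `e` is larger. -/
def lexLt {r : ℕ} (c e : Fin r → ℕ) : Prop :=
  ∃ t : Fin r, (∀ s : Fin r, s < t → c s = e s) ∧ c t < e t

/-- Reflexive lexicographic order on `ℕ^r`. -/
def lexLe {r : ℕ} (c e : Fin r → ℕ) : Prop := c = e ∨ lexLt c e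

end ChariXi

/-!
STATEMENT 13 (Lemma 2.3, explicit form in type `Aₙ`): in type `Aₙ` one has
`r = n(n+1)/2`, `l = n`, and the first `n` letters of `jw` are `(s₁, s₂, …, sₙ)`.
If `𝐜 ∈ ℕ^r` has `c_k = 0` for all `k > n`, then the monomial
`E_{α₁}^{(k₁)} E_{α₂}^{(k₂)} ⋯ E_{αₙ}^{(kₙ)}`, with `kᵢ = cₙ + cₙ₋₁ + ⋯ + c_{n-i+1}`,
equals `E_𝐜 + ∑_{𝐝 > 𝐜 (lex)} ξ_𝐝 E_𝐝` with `ξ_𝐝 ∈ ℤ[q,q⁻¹]`.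

Here the Cartan matrix is that of type `Aₙ` (`aCX`), `d ≡ 1`, `jw = γₙγₙ₋₁⋯γ₁` with
`γₘ = s₁⋯sₘ`, and `iw = τ(jw)` for the diagram automorphism `τ = Fin.rev`
(`i ↦ n+1-i` in 1-based labels).  All indices are 0-based (`s_i ↔ i-1 : Fin n`).
-/

open ChariXi

/-- The Cartan matrix of type `Aₙ`. -/
def ChariXi.aTypeA (n : ℕ) : Fin n → Fin n → ℤ := fun i j =>
  if i = j then 2 else if (i : ℕ) + 1 = j ∨ (j : ℕ) + 1 = i then -1 else 0

/-- The word `jw = γₙγₙ₋₁⋯γ₁`, `γₘ = s₁s₂⋯sₘ`, in type `Aₙ`. -/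
def ChariXi.jwordA (n : ℕ) : List (Fin n) :=
  ((List.range n).reverse).flatMap (fun m => (List.finRange n).take (m + 1))

/-- The word `iw = τ(jw)` for the nontrivial diagram automorphism `τ`. -/
def ChariXi.iwordA (n : ℕ) : List (Fin n) := (jwordA n).map Fin.rev

/-!
The straightening formula rewrites `E_m^{(k)} E_{m+1}^{(l)}` (with `E_m`, `E_{m+1}` adjacent) as a
sum over `t + u = l` of `ℤ[q,q⁻¹]`-multiples of `E_{m+1}^{(u)} (T_{m+1} E_m)^{(t)} E_m^{(k-t)}`.
Applied to the last two factors of `E_1^{(k_1)} ⋯ E_n^{(k_n)}`, it brings `E_n^{(u)}` to the front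
and leaves `T_n` of a monomial of the same kind in rank `n - 1`, times a power of `E_{n-1}`; here
`u ≥ k_n - k_{n-1} = c_1`, with equality only for the term in which that power is trivial.
Induction on the rank thus peels off one PBW factor at a time along the Coxeter word `s_n ⋯ s_1`,
leaving monomials in `E_1, …, E_{n-1}` on the right. The Coxeter automorphism `T_n ⋯ T_1` carries
`(E_{i+1}, T_{i+1})` to `(E_i, T_i)`, so the remaining letters of the word act on these monomials
as the word of rank `n - 1`, and a second induction on the rank expands them into PBW monomials.
That the `T_i` satisfy the braid relations is not part of `IsBraid` and is checked on generators.
-/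

namespace ChariXi

open Finset.HasAntidiagonal (antidiagonal mem_antidiagonal)

section QuantumIntegers

theorem qq_ne_zero : qq ≠ 0 := RatFunc.X_ne_zero

theorem qq_pow_ne_one {k : ℕ} (hk : k ≠ 0) : qq ^ k ≠ 1 := by
  intro h
  have hX : (Polynomial.X : Polynomial ℚ) ^ k = 1 :=
    RatFunc.algebraMap_injective ℚ (by simpa [qq] using h)
  exact hk (by simpa using congrArg Polynomial.natDegree hX)

theorem qq_pow_sub_inv_pow_ne_zero {k : ℕ} (hk : k ≠ 0) : qq ^ k - qq⁻¹ ^ k ≠ 0 := by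
  intro h
  refine qq_pow_ne_one (add_self_eq_zero.not.mpr hk) ?_
  calc qq ^ (k + k) = qq ^ k * qq⁻¹ ^ k := by rw [pow_add, ← sub_eq_zero.mp h]
    _ = 1 := by rw [inv_pow, mul_inv_cancel₀ (pow_ne_zero k qq_ne_zero)]

theorem qq_sub_inv_ne_zero : qq - qq⁻¹ ≠ 0 := by
  simpa only [pow_one] using qq_pow_sub_inv_pow_ne_zero one_ne_zero

theorem qInt_ne_zero {d m : ℕ} (hd : d ≠ 0) (hm : m ≠ 0) : qInt d m ≠ 0 :=
  div_ne_zero (qq_pow_sub_inv_pow_ne_zero (mul_ne_zero hd hm)) (qq_pow_sub_inv_pow_ne_zero hd)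

theorem qFact_ne_zero {d : ℕ} (hd : d ≠ 0) (m : ℕ) : qFact d m ≠ 0 := by
  induction m with
  | zero => exact one_ne_zero
  | succ m ih => exact mul_ne_zero (qInt_ne_zero hd m.succ_ne_zero) ih

theorem qInt_zero (d : ℕ) : qInt d 0 = 0 := by simp [qInt]

theorem qInt_one {d : ℕ} (hd : d ≠ 0) : qInt d 1 = 1 := by
  rw [qInt, mul_one, div_self (qq_pow_sub_inv_pow_ne_zero hd)]

theorem qInt_add (d a b : ℕ) :
    qInt d (a + b) = qq ^ (d * a) * qInt d b + qq⁻¹ ^ (d * b) * qInt d a := by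
  simp only [qInt, mul_div_assoc', ← add_div]
  ring

theorem qInt_two {d : ℕ} (hd : d ≠ 0) : qInt d 2 = qq ^ d + qq⁻¹ ^ d := by
  rw [← one_add_one_eq_two, qInt_add, qInt_one hd, mul_one, mul_one, mul_one]

theorem qFact_one {d : ℕ} (hd : d ≠ 0) : qFact d 1 = 1 := by
  simp [qFact, qInt_one hd]

theorem qBinom_zero_right {d : ℕ} (hd : d ≠ 0) (m : ℕ) : qBinom d m 0 = 1 := by
  simp [qBinom, qFact, qFact_ne_zero hd]

theorem qBinom_self {d : ℕ} (hd : d ≠ 0) (m : ℕ) : qBinom d m m = 1 := by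
  simp [qBinom, qFact, qFact_ne_zero hd]

theorem qBinom_two_one {d : ℕ} (hd : d ≠ 0) : qBinom d 2 1 = qq ^ d + qq⁻¹ ^ d := by
  simp [qBinom, qFact, qInt_one hd, qInt_two hd]

theorem qq_zpow_mem_𝒜 (z : ℤ) : qq ^ z ∈ 𝒜 := by
  have hq : qq ∈ 𝒜 := Subring.subset_closure (Set.mem_insert _ _)
  have hq' : qq⁻¹ ∈ 𝒜 := Subring.subset_closure (Set.mem_insert_of_mem _ rfl)
  obtain ⟨m, rfl | rfl⟩ := z.eq_nat_or_neg
  · simpa only [zpow_natCast] using pow_mem hq m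
  · simpa only [zpow_neg, zpow_natCast, inv_pow] using pow_mem hq' m

end QuantumIntegers

section DividedPowers

variable {A B : Type*} [Ring A] [Algebra 𝔽 A] [Ring B] [Algebra 𝔽 B]

/-- The divided power `x^{(m)} = x^m / [m]!` in an arbitrary `ℚ(q)`-algebra. -/
def dividedPow (x : A) (m : ℕ) : A := (qFact 1 m)⁻¹ • x ^ m

@[simp] theorem dividedPow_zero (x : A) : dividedPow x 0 = 1 := by simp [dividedPow, qFact]

@[simp] theorem dividedPow_one (x : A) : dividedPow x 1 = x := by
  simp [dividedPow, qFact_one]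

theorem mul_dividedPow (x : A) (m : ℕ) :
    x * dividedPow x m = qInt 1 (m + 1) • dividedPow x (m + 1) := by
  have hm : qInt 1 (m + 1) ≠ 0 := qInt_ne_zero one_ne_zero m.succ_ne_zero
  rw [dividedPow, dividedPow, qFact, mul_inv, mul_smul, smul_inv_smul₀ hm, mul_smul_comm, pow_succ']

theorem dividedPow_mul (x : A) (m : ℕ) :
    dividedPow x m * x = qInt 1 (m + 1) • dividedPow x (m + 1) := by
  rw [← mul_dividedPow, dividedPow, smul_mul_assoc, mul_smul_comm, pow_mul_comm']

theorem map_dividedPow (φ : A →ₐ[𝔽] B) (x : A) (m : ℕ) :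
    φ (dividedPow x m) = dividedPow (φ x) m := by
  simp [dividedPow]

theorem commute_dividedPow {x y : A} (h : Commute x y) (l m : ℕ) :
    Commute (dividedPow x l) (dividedPow y m) :=
  ((h.pow_pow l m).smul_left _).smul_right _

theorem dividedPow_mul_of_mul_eq_smul {x b : A} {r : 𝔽} (h : x * b = r • (b * x)) (t : ℕ) :
    dividedPow x t * b = r ^ t • (b * dividedPow x t) := by
  have hpow : x ^ t * b = r ^ t • (b * x ^ t) := by
    induction t with
    | zero => simp
    | succ t ih =>
      rw [pow_succ, mul_assoc, h, mul_smul_comm, ← mul_assoc, ih, smul_mul_assoc, smul_smul,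
        mul_assoc, pow_succ']
  rw [dividedPow, smul_mul_assoc, hpow, mul_smul_comm, smul_comm]

/-- Divided powers with integer exponents, equal to `0` when the exponent is negative; this lets
the straightening formula be summed without side conditions. -/
def zdividedPow (x : A) : ℤ → A
  | Int.ofNat m => dividedPow x m
  | Int.negSucc _ => 0

@[simp] theorem zdividedPow_natCast (x : A) (m : ℕ) : zdividedPow x m = dividedPow x m := rfl

@[simp] theorem zdividedPow_zero (x : A) : zdividedPow x 0 = 1 := dividedPow_zero x

theorem zdividedPow_of_neg (x : A) {z : ℤ} (hz : z < 0) : zdividedPow x z = 0 := by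
  obtain ⟨m, rfl⟩ := Int.eq_negSucc_of_lt_zero hz
  rfl

section Straightening

variable {a b x : A}

theorem dividedPow_succ_mul_of_commutator (hab : a * b = x + qq⁻¹ • (b * a))
    (hax : a * x = qq • (x * a)) (m : ℕ) :
    dividedPow a (m + 1) * b =
      qq⁻¹ ^ (m + 1) • (b * dividedPow a (m + 1)) + x * dividedPow a m := by
  induction m with
  | zero => simp [hab, add_comm]
  | succ m ih =>
    have hq : qInt 1 (m + 2) ≠ 0 := qInt_ne_zero one_ne_zero (m + 1).succ_ne_zero
    have hxa : x * a * dividedPow a m = qInt 1 (m + 1) • (x * dividedPow a (m + 1)) := by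
      rw [mul_assoc, mul_dividedPow, mul_smul_comm]
    have hqInt : qInt 1 (m + 2) = qq⁻¹ ^ (m + 1) + qq * qInt 1 (m + 1) := by
      rw [show m + 2 = 1 + (m + 1) by ring, qInt_add, qInt_one one_ne_zero]
      ring
    refine smul_right_injective A hq ?_
    calc qInt 1 (m + 2) • (dividedPow a (m + 2) * b)
        = a * (dividedPow a (m + 1) * b) := by
          rw [← smul_mul_assoc, ← mul_dividedPow, mul_assoc]
      _ = qq⁻¹ ^ (m + 1) • (x * dividedPow a (m + 1)
            + qq⁻¹ • (b * (a * dividedPow a (m + 1))))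
          + qq • (qInt 1 (m + 1) • (x * dividedPow a (m + 1))) := by
          rw [ih, mul_add, mul_smul_comm, ← mul_assoc, hab, ← mul_assoc, hax, add_mul,
            smul_mul_assoc, smul_mul_assoc, hxa, mul_assoc b]
      _ = qInt 1 (m + 2) • (qq⁻¹ ^ (m + 2) • (b * dividedPow a (m + 2))
            + x * dividedPow a (m + 1)) := by
          rw [mul_dividedPow, mul_smul_comm, smul_add, smul_add, smul_smul, smul_smul, smul_smul,
            smul_smul, add_right_comm, ← add_smul, ← hqInt, add_comm]
          congr 2
          ring

theorem zdividedPow_mul_of_commutator (hab : a * b = x + qq⁻¹ • (b * a))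
    (hax : a * x = qq • (x * a)) (z : ℤ) :
    zdividedPow a z * b = qq ^ (-z) • (b * zdividedPow a z) + x * zdividedPow a (z - 1) := by
  rcases lt_trichotomy z 0 with hz | rfl | hz
  · simp [zdividedPow_of_neg, hz, show z - 1 < 0 by lia]
  · simp [zdividedPow_of_neg]
  · obtain ⟨m, rfl⟩ : ∃ m : ℕ, z = (m + 1 : ℕ) := ⟨(z - 1).toNat, by lia⟩
    rw [zpow_neg, zpow_natCast, ← inv_pow, show ((m + 1 : ℕ) : ℤ) - 1 = m by push_cast; ring]
    exact dividedPow_succ_mul_of_commutator hab hax m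

/-- The term of index `(t, u)` in the straightening of `a^{(m)} b^{(t + u)}`. -/
def straighteningTerm (a b x : A) (m t u : ℕ) : A :=
  qq ^ (-(((m : ℤ) - t) * u)) •
    (dividedPow b u * dividedPow x t * zdividedPow a ((m : ℤ) - t))

theorem straighteningTerm_mul (hab : a * b = x + qq⁻¹ • (b * a)) (hax : a * x = qq • (x * a))
    (hxb : x * b = qq • (b * x)) (m t u : ℕ) :
    straighteningTerm a b x m t u * b =
      (qq ^ t * qInt 1 (u + 1)) • straighteningTerm a b x m t (u + 1)
        + (qq⁻¹ ^ u * qInt 1 (t + 1)) • straighteningTerm a b x m (t + 1) u := by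
  have hb : dividedPow b u * dividedPow x t * (b * zdividedPow a ((m : ℤ) - t)) =
      (qq ^ t * qInt 1 (u + 1)) •
        (dividedPow b (u + 1) * dividedPow x t * zdividedPow a ((m : ℤ) - t)) := by
    rw [← mul_assoc, mul_assoc (dividedPow b u), dividedPow_mul_of_mul_eq_smul hxb,
      mul_smul_comm, ← mul_assoc, dividedPow_mul]
    simp only [smul_mul_assoc, smul_smul]
  have hx : dividedPow b u * dividedPow x t * (x * zdividedPow a ((m : ℤ) - (t + 1 : ℕ))) =
      qInt 1 (t + 1) •
        (dividedPow b u * dividedPow x (t + 1) * zdividedPow a ((m : ℤ) - (t + 1 : ℕ))) := by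
    rw [← mul_assoc, mul_assoc (dividedPow b u), dividedPow_mul, mul_smul_comm, smul_mul_assoc]
  have hu : qq ^ (-(((m : ℤ) - t) * u)) * qq ^ (-((m : ℤ) - t))
      = qq ^ (-(((m : ℤ) - t) * (u + 1 : ℕ))) := by
    rw [← zpow_add₀ qq_ne_zero]
    push_cast
    ring_nf
  have ht : qq⁻¹ ^ u * qq ^ (-(((m : ℤ) - (t + 1 : ℕ)) * u)) = qq ^ (-(((m : ℤ) - t) * u)) := by
    rw [inv_pow, ← zpow_natCast, ← zpow_neg, ← zpow_add₀ qq_ne_zero]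
    push_cast
    ring_nf
  rw [straighteningTerm, smul_mul_assoc, mul_assoc, zdividedPow_mul_of_commutator hab hax,
    show (m : ℤ) - t - 1 = m - (t + 1 : ℕ) by push_cast; ring, mul_add, mul_smul_comm, hb, hx,
    straighteningTerm, straighteningTerm, ← hu, ← ht]
  simp only [smul_add, smul_smul]
  congr 2 <;> ring

theorem dividedPow_mul_dividedPow (hab : a * b = x + qq⁻¹ • (b * a))
    (hax : a * x = qq • (x * a)) (hxb : x * b = qq • (b * x)) (m l : ℕ) :
    dividedPow a m * dividedPow b l =
      ∑ p ∈ antidiagonal l, straighteningTerm a b x m p.1 p.2 := by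
  induction l with
  | zero => simp [straighteningTerm]
  | succ l ih =>
    refine smul_right_injective A (qInt_ne_zero one_ne_zero l.succ_ne_zero) ?_
    have hsplit : ∀ p ∈ antidiagonal (l + 1),
        qInt 1 (l + 1) • straighteningTerm a b x m p.1 p.2 =
          (qq ^ p.1 * qInt 1 p.2) • straighteningTerm a b x m p.1 p.2
            + (qq⁻¹ ^ p.2 * qInt 1 p.1) • straighteningTerm a b x m p.1 p.2 := by
      intro p hp
      rw [← mem_antidiagonal.mp hp, qInt_add, one_mul, one_mul, add_smul]
    calc qInt 1 (l + 1) • (dividedPow a m * dividedPow b (l + 1))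
        = ∑ p ∈ antidiagonal l, straighteningTerm a b x m p.1 p.2 * b := by
          rw [← mul_smul_comm, ← dividedPow_mul, ← mul_assoc, ih, Finset.sum_mul]
      _ = qInt 1 (l + 1) •
            ∑ p ∈ antidiagonal (l + 1), straighteningTerm a b x m p.1 p.2 := by
          simp only [straighteningTerm_mul hab hax hxb, Finset.smul_sum]
          rw [Finset.sum_congr rfl hsplit, Finset.sum_add_distrib, Finset.sum_add_distrib]
          congr 1
          · simp [Finset.Nat.sum_antidiagonal_succ', qInt_zero]
          · simp [Finset.Nat.sum_antidiagonal_succ, qInt_zero]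

end Straightening

end DividedPowers

section QBracket

variable {R A B : Type*} [CommRing R] [Ring A] [Algebra R A] [Ring B] [Algebra R B] {α γ : R}

/-- The two-parameter bracket `α xy + γ yx`. It covers at once the three shapes in which Lusztig's
operator `Tᵢ` modifies a neighbouring generator: `(1, -q⁻¹)` on the `E`'s, `(-q, 1)` on the `F`'s
and `(1, 0)` on the `K`'s. -/
def qBracket (α γ : R) (x y : A) : A := α • (x * y) + γ • (y * x)

theorem map_qBracket {S : Type*} [FunLike S A B] [AlgHomClass S R A B] (φ : S) (x y : A) :
    φ (qBracket α γ x y) = qBracket α γ (φ x) (φ y) := by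
  simp [qBracket]

theorem op_qBracket (x y : A) :
    MulOpposite.op (qBracket α γ x y) = qBracket γ α (MulOpposite.op x) (MulOpposite.op y) :=
  congrArg MulOpposite.op (add_comm (α • (x * y)) (γ • (y * x)))

theorem qBracket_right_comm {x y z : A} (h : Commute y z) :
    qBracket α γ (qBracket α γ x y) z = qBracket α γ (qBracket α γ x z) y := by
  have hxyz : x * y * z = x * z * y := by rw [mul_assoc, h.eq, mul_assoc]
  have hzyx : z * (y * x) = y * (z * x) := by rw [← mul_assoc, ← h.eq, mul_assoc]
  simp only [qBracket, add_mul, mul_add, smul_mul_assoc, mul_smul_comm, hxyz, hzyx]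
  simp only [mul_assoc]
  module

theorem qBracket_assoc {x y z : A} (h : Commute x z) :
    qBracket α γ (qBracket α γ x y) z = qBracket α γ x (qBracket α γ y z) := by
  have hyxz : y * x * z = y * z * x := by rw [mul_assoc, h.eq, mul_assoc]
  have hzxy : z * (x * y) = x * (z * y) := by rw [← mul_assoc, ← h.eq, mul_assoc]
  simp only [qBracket, add_mul, mul_add, smul_mul_assoc, mul_smul_comm, hyxz, hzxy]
  simp only [mul_assoc]
  module

end QBracket

section LusztigFamily

variable {ι R A : Type*} [CommRing R] [Ring A] [Algebra R A]

/-- A family `G` of elements of `A`, indexed by the vertices of a simply laced Dynkin graph `Γ`, on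
which the automorphisms `Tᵢ` act by formulas of Lusztig's type: trivially between non-adjacent
vertices, by a bracket between adjacent ones. The last three fields are the consequences of the
formula for `Tᵢ Gᵢ` that the braid relations need; that formula itself leaves the family. -/
structure IsLusztigFamily (Γ : SimpleGraph ι) (α γ : R) (T : ι → A ≃ₐ[R] A) (G : ι → A) :
    Prop where
  commute : ∀ {i j}, ¬ Γ.Adj i j → Commute (G i) (G j)
  map_far : ∀ {i j}, i ≠ j → ¬ Γ.Adj i j → T i (G j) = G j
  map_adj : ∀ {i j}, Γ.Adj i j → T i (G j) = qBracket α γ (G j) (G i)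
  map_map_adj : ∀ {i j}, Γ.Adj i j → T j (T i (G j)) = G i
  map_map_self : ∀ {i j}, i ≠ j → ¬ Γ.Adj i j → T j (T i (G i)) = T i (G i)
  map_map_map_self : ∀ {i j}, Γ.Adj i j → T i (T j (T i (G i))) = T j (G j)

namespace IsLusztigFamily

variable {Γ : SimpleGraph ι} {α γ : R} {T : ι → A ≃ₐ[R] A} {G : ι → A} {i j : ι}

theorem map_map_comm (h : IsLusztigFamily Γ α γ T G) (hij : i ≠ j) (hΓ : ¬ Γ.Adj i j) (k : ι) :
    T i (T j (G k)) = T j (T i (G k)) := by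
  have hΓ' : ¬ Γ.Adj j i := fun hji => hΓ hji.symm
  rcases eq_or_ne i k with rfl | hik
  · rw [h.map_far hij.symm hΓ', h.map_map_self hij hΓ]
  rcases eq_or_ne j k with rfl | hjk
  · rw [h.map_far hij hΓ, h.map_map_self hij.symm hΓ']
  by_cases hi : Γ.Adj i k <;> by_cases hj : Γ.Adj j k
  · rw [h.map_adj hi, h.map_adj hj, map_qBracket, map_qBracket, h.map_adj hi, h.map_adj hj,
      h.map_far hij hΓ, h.map_far hij.symm hΓ', qBracket_right_comm (h.commute hΓ)]
  · rw [h.map_far hjk hj, h.map_adj hi, map_qBracket, h.map_far hjk hj, h.map_far hij.symm hΓ']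
  · rw [h.map_far hik hi, h.map_adj hj, map_qBracket, h.map_far hik hi, h.map_far hij hΓ]
  · rw [h.map_far hik hi, h.map_far hjk hj, h.map_far hik hi]

theorem map_map_map_of_adj_of_not_adj (h : IsLusztigFamily Γ α γ T G) (hij : Γ.Adj i j) {k : ι}
    (hik : Γ.Adj i k) (hjk : j ≠ k) (hjk' : ¬ Γ.Adj j k) :
    T i (T j (T i (G k))) = T j (T i (T j (G k))) := by
  rw [h.map_far hjk hjk', h.map_adj hik, map_qBracket, map_qBracket, h.map_far hjk hjk',
    h.map_map_adj hij.symm, h.map_adj hik, h.map_adj hij.symm,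
    qBracket_assoc (h.commute fun hkj => hjk' hkj.symm)]

theorem map_map_map_braid (h : IsLusztigFamily Γ α γ T G) (hΓ : Γ.CliqueFree 3)
    (hij : Γ.Adj i j) (k : ι) :
    T i (T j (T i (G k))) = T j (T i (T j (G k))) := by
  rcases eq_or_ne i k with rfl | hik
  · rw [h.map_map_map_self hij, h.map_map_adj hij.symm]
  rcases eq_or_ne j k with rfl | hjk
  · rw [h.map_map_map_self hij.symm, h.map_map_adj hij]
  by_cases hi : Γ.Adj i k <;> by_cases hj : Γ.Adj j k
  · classical
    exact (hΓ {i, j, k} (SimpleGraph.is3Clique_triple_iff.mpr ⟨hij, hi, hj⟩)).elim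
  · exact h.map_map_map_of_adj_of_not_adj hij hi hjk hj
  · exact (h.map_map_map_of_adj_of_not_adj hij.symm hj hik hi).symm
  · rw [h.map_far hik hi, h.map_far hjk hj, h.map_far hik hi, h.map_far hjk hj]

end IsLusztigFamily

end LusztigFamily

section RankTwo

variable {k A : Type*} [Field k] [Ring A] [Algebra k A] {q : k}

theorem mul_inv_eq_smul {K K' x : A} {r : k} (hK : K * K' = 1) (hK' : K' * K = 1)
    (h : K * x = r • (x * K)) : x * K' = r • (K' * x) := by
  calc x * K' = K' * (K * x) * K' := by rw [← mul_assoc, hK', one_mul]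
    _ = r • (K' * x) := by
      rw [h, mul_smul_comm, smul_mul_assoc, ← mul_assoc, mul_assoc, hK, mul_one]

theorem mul_mul_eq_smul {K x y : A} {r s : k} (hx : K * x = r • (x * K))
    (hy : K * y = s • (y * K)) : K * (x * y) = (r * s) • (x * y * K) := by
  rw [← mul_assoc, hx, smul_mul_assoc, mul_assoc, hy, mul_smul_comm, smul_smul, mul_assoc]

theorem mul_qBracket_eq_smul {K x y : A} {r s : k} (α γ : k) (hx : K * x = r • (x * K))
    (hy : K * y = s • (y * K)) : K * qBracket α γ x y = (r * s) • (qBracket α γ x y * K) := by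
  rw [qBracket, mul_add, mul_smul_comm, mul_smul_comm, mul_mul_eq_smul hx hy,
    mul_mul_eq_smul hy hx, add_mul, smul_mul_assoc, smul_mul_assoc]
  module

theorem qBracket_smul_right (α γ r : k) (x y : A) :
    qBracket α γ x (r • y) = r • qBracket α γ x y := by
  rw [qBracket, qBracket, mul_smul_comm, smul_mul_assoc]
  module

theorem qBracket_commutator {F x y : A} (α γ : k) (h : Commute x F) :
    qBracket α γ x y * F - F * qBracket α γ x y = qBracket α γ x (y * F - F * y) := by
  have hFx : F * (x * y) = x * (F * y) := by rw [← mul_assoc, ← h.eq, mul_assoc]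
  simp only [qBracket, add_mul, mul_add, smul_mul_assoc, mul_smul_comm, mul_assoc, h.eq, hFx,
    mul_sub, sub_mul]
  module

theorem qBracket_qBracket_E (hq : q ≠ 0) (hq' : q - q⁻¹ ≠ 0) {K K' F x y : A}
    (hK : K * K' = 1) (hK' : K' * K = 1)
    (hx : K * x = q⁻¹ • (x * K)) (hy : K * y = q ^ 2 • (y * K))
    (hyF : y * F - F * y = (q - q⁻¹)⁻¹ • (K - K')) (hxF : Commute x F) :
    qBracket 1 (-q⁻¹) (-(K' * F)) (qBracket 1 (-q⁻¹) x y) = x := by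
  set Y := qBracket 1 (-q⁻¹) x y
  have hYK' : Y * K' = q • (K' * Y) := by
    refine mul_inv_eq_smul hK hK' ?_
    rw [mul_qBracket_eq_smul _ _ hx hy, show q⁻¹ * q ^ 2 = q by field_simp]
  have hxK : x * K = q • (K * x) := by rw [hx, smul_inv_smul₀ hq]
  have hxKK' : qBracket 1 (-q⁻¹) x (K - K') = (q - q⁻¹) • (K * x) := by
    rw [qBracket, mul_sub, sub_mul, hxK, mul_inv_eq_smul hK hK' hx]
    module
  have hYF : Y * F - F * Y = K * x := by
    rw [qBracket_commutator _ _ hxF, hyF, qBracket_smul_right, hxKK', inv_smul_smul₀ hq']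
  calc qBracket 1 (-q⁻¹) (-(K' * F)) Y = K' * (Y * F - F * Y) := by
        rw [qBracket, mul_neg, ← mul_assoc Y, hYK', smul_mul_assoc, mul_sub]
        simp only [mul_assoc, neg_mul]
        match_scalars <;> field_simp
    _ = x := by rw [hYF, ← mul_assoc, hK', one_mul]

open MulOpposite in
/-- The case of the `F`'s is that of the `E`'s in the opposite algebra, with `q` and `q⁻¹`
interchanged. -/
theorem qBracket_qBracket_F (hq : q ≠ 0) (hq' : q - q⁻¹ ≠ 0) {K K' E x y : A}
    (hK : K * K' = 1) (hK' : K' * K = 1)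
    (hx : K * x = q • (x * K)) (hy : K * y = q⁻¹ ^ 2 • (y * K))
    (hyE : E * y - y * E = (q - q⁻¹)⁻¹ • (K - K')) (hxE : Commute x E) :
    qBracket (-q) 1 (-(E * K)) (qBracket (-q) 1 x y) = x := by
  have hswap : q⁻¹ - q⁻¹⁻¹ = -(q - q⁻¹) := by rw [inv_inv, neg_sub]
  have hxop : op K' * op x = q⁻¹⁻¹ • (op x * op K') := by
    rw [inv_inv]
    exact congrArg op (mul_inv_eq_smul hK hK' hx)
  have hyop : op K' * op y = q⁻¹ ^ 2 • (op y * op K') :=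
    congrArg op (mul_inv_eq_smul hK hK' hy)
  have hyEop : op y * op E - op E * op y = (q⁻¹ - q⁻¹⁻¹)⁻¹ • (op K' - op K) := by
    rw [hswap, inv_neg, neg_smul, ← smul_neg, neg_sub]
    exact congrArg op hyE
  have hop := qBracket_qBracket_E (inv_ne_zero hq) (hswap ▸ neg_ne_zero.mpr hq')
    (congrArg op hK) (congrArg op hK') hxop hyop hyEop hxE.op
  rw [inv_inv] at hop
  rw [← op_inj, op_qBracket, op_qBracket, op_neg, op_mul]
  exact hop

theorem mul_qBracket_right_of_serre (hq : q ≠ 0) {x y : A}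
    (h : y ^ 2 * x - (q + q⁻¹) • (y * x * y) + x * y ^ 2 = 0) :
    qBracket 1 (-q⁻¹) x y * y = q • (y * qBracket 1 (-q⁻¹) x y) := by
  have hxyy : x * y ^ 2 = (q + q⁻¹) • (y * x * y) - y ^ 2 * x :=
    eq_sub_of_add_eq (by rw [← sub_eq_zero, ← h]; abel)
  simp only [qBracket, one_smul, add_mul, mul_add, smul_mul_assoc, mul_smul_comm]
  rw [mul_assoc x, ← pow_two, hxyy, ← mul_assoc y y, ← pow_two, ← mul_assoc]
  match_scalars <;> field_simp
  ring

theorem mul_qBracket_left_of_serre (hq : q ≠ 0) {x y : A}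
    (h : x ^ 2 * y - (q + q⁻¹) • (x * y * x) + y * x ^ 2 = 0) :
    x * qBracket 1 (-q⁻¹) x y = q • (qBracket 1 (-q⁻¹) x y * x) := by
  have hxxy : x ^ 2 * y = (q + q⁻¹) • (x * y * x) - y * x ^ 2 :=
    eq_sub_of_add_eq (by rw [← sub_eq_zero, ← h]; abel)
  simp only [qBracket, one_smul, add_mul, mul_add, smul_mul_assoc, mul_smul_comm]
  rw [← mul_assoc x x, ← pow_two, hxxy, mul_assoc y x x, ← pow_two, ← mul_assoc]
  match_scalars <;> field_simp
  ring

end RankTwo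

section Presentation

variable {n : ℕ} {a : Fin n → Fin n → ℤ} {d : Fin n → ℕ} {A : Type*} [Ring A] [Algebra 𝔽 A]

theorem mk_eq_of_rel {x y : FreeAlgebra 𝔽 (Gen n)} (h : Rel n a d x y) :
    mk n a d x = mk n a d y :=
  RingQuot.mkAlgHom_rel 𝔽 h

theorem Kg_mul_Kinvg (i : Fin n) : Kg n a d i * Kinvg n a d i = 1 := by
  simpa [Kg, Kinvg] using mk_eq_of_rel (Rel.KKinv (a := a) (d := d) i)

theorem Kinvg_mul_Kg (i : Fin n) : Kinvg n a d i * Kg n a d i = 1 := by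
  simpa [Kg, Kinvg] using mk_eq_of_rel (Rel.KinvK (a := a) (d := d) i)

theorem commute_Kg (i j : Fin n) : Commute (Kg n a d i) (Kg n a d j) := by
  simpa [commute_iff_eq, Kg] using mk_eq_of_rel (Rel.KK (a := a) (d := d) i j)

theorem Kg_mul_Eg (i j : Fin n) :
    Kg n a d i * Eg n a d j = qq ^ ((d i : ℤ) * a i j) • (Eg n a d j * Kg n a d i) := by
  simpa [Kg, Eg] using mk_eq_of_rel (Rel.KE (a := a) (d := d) i j)

theorem Kg_mul_Fg (i j : Fin n) :
    Kg n a d i * Fg n a d j = qq ^ (-((d i : ℤ) * a i j)) • (Fg n a d j * Kg n a d i) := by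
  simpa [Kg, Fg] using mk_eq_of_rel (Rel.KF (a := a) (d := d) i j)

theorem Eg_mul_Fg_sub (i : Fin n) :
    Eg n a d i * Fg n a d i - Fg n a d i * Eg n a d i =
      (qq ^ d i - qq⁻¹ ^ d i)⁻¹ • (Kg n a d i - Kinvg n a d i) := by
  simpa [Eg, Fg, Kg, Kinvg] using mk_eq_of_rel (Rel.EF (a := a) (d := d) i i)

theorem commute_Eg_Fg {i j : Fin n} (h : i ≠ j) : Commute (Eg n a d i) (Fg n a d j) := by
  simpa [commute_iff_eq, Eg, Fg, h, sub_eq_zero] using mk_eq_of_rel (Rel.EF (a := a) (d := d) i j)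

/-- The left-hand side of the quantum Serre relation of order `m`. -/
def serreSum (dd m : ℕ) (x y : A) : A :=
  ∑ r ∈ Finset.range (m + 1), ((-1 : 𝔽) ^ r * qBinom dd m r) • (x ^ r * y * x ^ (m - r))

theorem serreSum_one {dd : ℕ} (hd : dd ≠ 0) (x y : A) : serreSum dd 1 x y = y * x - x * y := by
  simp [serreSum, Finset.sum_range_succ, qBinom_zero_right hd, qBinom_self hd, sub_eq_add_neg]

theorem serreSum_two {dd : ℕ} (hd : dd ≠ 0) (x y : A) :
    serreSum dd 2 x y =
      x ^ 2 * y - (qq ^ dd + qq⁻¹ ^ dd) • (x * y * x) + y * x ^ 2 := by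
  simp only [serreSum, Finset.sum_range_succ, Finset.sum_range_zero, qBinom_zero_right hd,
    qBinom_self hd, qBinom_two_one hd]
  simp only [pow_zero, pow_one, neg_mul, one_mul, mul_one, one_smul, neg_smul, even_two.neg_pow,
    one_pow, Nat.sub_zero, Nat.sub_self, Nat.add_one_sub_one]
  abel

theorem serreSum_Eg {i j : Fin n} (h : i ≠ j) :
    serreSum (d i) (1 - a i j).toNat (Eg n a d i) (Eg n a d j) = 0 := by
  simpa [serreSum, Eg] using mk_eq_of_rel (Rel.serreE (a := a) (d := d) i j h)

theorem serreSum_Fg {i j : Fin n} (h : i ≠ j) :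
    serreSum (d i) (1 - a i j).toNat (Fg n a d i) (Fg n a d j) = 0 := by
  simpa [serreSum, Fg] using mk_eq_of_rel (Rel.serreF (a := a) (d := d) i j h)

theorem map_Kinvg_eq_of_map_Kg_eq {φ ψ : U n a d →ₐ[𝔽] A} {i j : Fin n}
    (h : φ (Kg n a d i) = ψ (Kg n a d j)) : φ (Kinvg n a d i) = ψ (Kinvg n a d j) := by
  refine left_inv_eq_right_inv (a := φ (Kg n a d i)) ?_ ?_
  · rw [← map_mul, Kinvg_mul_Kg, map_one]
  · rw [h, ← map_mul, Kg_mul_Kinvg, map_one]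

theorem algHom_ext {φ ψ : U n a d →ₐ[𝔽] A} (hE : ∀ i, φ (Eg n a d i) = ψ (Eg n a d i))
    (hF : ∀ i, φ (Fg n a d i) = ψ (Fg n a d i)) (hK : ∀ i, φ (Kg n a d i) = ψ (Kg n a d i)) :
    φ = ψ := by
  refine RingQuot.ringQuot_ext' 𝔽 φ ψ (FreeAlgebra.hom_ext (funext fun g => ?_))
  cases g with
  | E i => exact hE i
  | F i => exact hF i
  | K i => exact hK i
  | Kinv i => exact map_Kinvg_eq_of_map_Kg_eq (hK i)

theorem algEquiv_ext {φ ψ : U n a d ≃ₐ[𝔽] U n a d}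
    (hE : ∀ i, φ (Eg n a d i) = ψ (Eg n a d i)) (hF : ∀ i, φ (Fg n a d i) = ψ (Fg n a d i))
    (hK : ∀ i, φ (Kg n a d i) = ψ (Kg n a d i)) : φ = ψ :=
  AlgEquiv.coe_toAlgHom_injective (algHom_ext hE hF hK)

end Presentation

section SimplyLaced

/-- `a` is the Cartan matrix of the simply laced Dynkin diagram `Γ`. -/
structure IsSimplyLaced {n : ℕ} (Γ : SimpleGraph (Fin n)) (a : Fin n → Fin n → ℤ) : Prop where
  self : ∀ i, a i i = 2
  adj : ∀ {i j}, Γ.Adj i j → a i j = -1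
  far : ∀ {i j}, i ≠ j → ¬ Γ.Adj i j → a i j = 0

variable {n : ℕ} {Γ : SimpleGraph (Fin n)} {a : Fin n → Fin n → ℤ} {i j : Fin n}

local notation "Uₐ" => U n a (fun _ => 1)
local notation "Eₐ" => Eg n a (fun _ => 1)
local notation "Fₐ" => Fg n a (fun _ => 1)
local notation "Kₐ" => Kg n a (fun _ => 1)
local notation "Kinvₐ" => Kinvg n a (fun _ => 1)

namespace IsSimplyLaced

theorem commute_Eg (ha : IsSimplyLaced Γ a) (h : ¬ Γ.Adj i j) : Commute (Eₐ i) (Eₐ j) := by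
  rcases eq_or_ne i j with rfl | hij
  · exact Commute.refl _
  have hserre := serreSum_Eg (a := a) (d := fun _ => 1) hij
  rw [ha.far hij h, sub_zero, Int.toNat_one, serreSum_one one_ne_zero] at hserre
  exact (sub_eq_zero.mp hserre).symm

theorem commute_Fg (ha : IsSimplyLaced Γ a) (h : ¬ Γ.Adj i j) : Commute (Fₐ i) (Fₐ j) := by
  rcases eq_or_ne i j with rfl | hij
  · exact Commute.refl _
  have hserre := serreSum_Fg (a := a) (d := fun _ => 1) hij
  rw [ha.far hij h, sub_zero, Int.toNat_one, serreSum_one one_ne_zero] at hserre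
  exact (sub_eq_zero.mp hserre).symm

theorem serre_Eg (ha : IsSimplyLaced Γ a) (h : Γ.Adj i j) :
    Eₐ i ^ 2 * Eₐ j - (qq + qq⁻¹) • (Eₐ i * Eₐ j * Eₐ i) + Eₐ j * Eₐ i ^ 2 = 0 := by
  have hserre := serreSum_Eg (a := a) (d := fun _ => 1) h.ne
  rwa [ha.adj h, show (1 - (-1 : ℤ)).toNat = 2 from rfl, serreSum_two one_ne_zero, pow_one,
    pow_one] at hserre

end IsSimplyLaced

theorem Ediv_eq_dividedPow (i : Fin n) (m : ℕ) :
    Ediv n a (fun _ => 1) i m = dividedPow (Eₐ i) m := rfl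

theorem Fdiv_eq_dividedPow (i : Fin n) (m : ℕ) :
    Fdiv n a (fun _ => 1) i m = dividedPow (Fₐ i) m := rfl

namespace IsBraid

variable {T : Fin n → U n a (fun _ => 1) ≃ₐ[𝔽] U n a (fun _ => 1)}

theorem map_Eg_self (hT : IsBraid n a (fun _ => 1) T) (i : Fin n) :
    T i (Eₐ i) = -(Kinvₐ i * Fₐ i) := by
  have h : T i (Eₐ i) = (-1 : 𝔽) • (Kinvₐ i * Fₐ i) := by
    simpa [Ediv_eq_dividedPow, Fdiv_eq_dividedPow] using hT.TEself i 1
  exact h.trans (neg_one_smul 𝔽 (Kinvₐ i * Fₐ i))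

theorem map_Fg_self (hT : IsBraid n a (fun _ => 1) T) (i : Fin n) :
    T i (Fₐ i) = -(Eₐ i * Kₐ i) := by
  have h : T i (Fₐ i) = (-1 : 𝔽) • (Eₐ i * Kₐ i) := by
    simpa [Ediv_eq_dividedPow, Fdiv_eq_dividedPow] using hT.TFself i 1
  exact h.trans (neg_one_smul 𝔽 (Eₐ i * Kₐ i))

theorem map_Kg_self (hT : IsBraid n a (fun _ => 1) T) (ha : IsSimplyLaced Γ a) (i : Fin n) :
    T i (Kₐ i) = Kinvₐ i := by
  rw [hT.TK, ha.self, Kzpow, if_neg (by decide), show (- -(2 : ℤ)).toNat = 2 from rfl, pow_two,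
    ← mul_assoc, Kg_mul_Kinvg, one_mul]

theorem map_Eg_adj (hT : IsBraid n a (fun _ => 1) T) (ha : IsSimplyLaced Γ a)
    (h : Γ.Adj i j) : T i (Eₐ j) = qBracket 1 (-qq⁻¹) (Eₐ j) (Eₐ i) := by
  simpa [Ediv_eq_dividedPow, Finset.sum_range_succ, qBracket, ha.adj h] using hT.TE i j 1 h.ne

theorem map_Fg_adj (hT : IsBraid n a (fun _ => 1) T) (ha : IsSimplyLaced Γ a)
    (h : Γ.Adj i j) : T i (Fₐ j) = qBracket (-qq) 1 (Fₐ j) (Fₐ i) := by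
  simpa [Fdiv_eq_dividedPow, Finset.sum_range_succ, qBracket, ha.adj h, add_comm] using
    hT.TF i j 1 h.ne

theorem map_Kg_adj (hT : IsBraid n a (fun _ => 1) T) (ha : IsSimplyLaced Γ a)
    (h : Γ.Adj i j) : T i (Kₐ j) = qBracket 1 (0 : 𝔽) (Kₐ j) (Kₐ i) := by
  simp [hT.TK, ha.adj h, Kzpow, qBracket]

theorem map_Eg_far (hT : IsBraid n a (fun _ => 1) T) (ha : IsSimplyLaced Γ a) (hij : i ≠ j)
    (h : ¬ Γ.Adj i j) : T i (Eₐ j) = Eₐ j := by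
  simpa [Ediv_eq_dividedPow, ha.far hij h] using hT.TE i j 1 hij

theorem map_Fg_far (hT : IsBraid n a (fun _ => 1) T) (ha : IsSimplyLaced Γ a) (hij : i ≠ j)
    (h : ¬ Γ.Adj i j) : T i (Fₐ j) = Fₐ j := by
  simpa [Fdiv_eq_dividedPow, ha.far hij h] using hT.TF i j 1 hij

theorem map_Kg_far (hT : IsBraid n a (fun _ => 1) T) (ha : IsSimplyLaced Γ a) (hij : i ≠ j)
    (h : ¬ Γ.Adj i j) : T i (Kₐ j) = Kₐ j := by
  simp [hT.TK, ha.far hij h, Kzpow]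

theorem map_map_Eg_adj (hT : IsBraid n a (fun _ => 1) T) (ha : IsSimplyLaced Γ a)
    (h : Γ.Adj i j) : T j (T i (Eₐ j)) = Eₐ i := by
  rw [hT.map_Eg_adj ha h, map_qBracket, hT.map_Eg_self, hT.map_Eg_adj ha h.symm]
  refine qBracket_qBracket_E qq_ne_zero qq_sub_inv_ne_zero (Kg_mul_Kinvg j) (Kinvg_mul_Kg j)
    ?_ ?_ ?_ (commute_Eg_Fg h.ne)
  · simpa [ha.adj h.symm] using Kg_mul_Eg (a := a) (d := fun _ => 1) j i
  · simpa [ha.self] using Kg_mul_Eg (a := a) (d := fun _ => 1) j j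
  · simpa using Eg_mul_Fg_sub (a := a) (d := fun _ => 1) j

theorem map_map_Fg_adj (hT : IsBraid n a (fun _ => 1) T) (ha : IsSimplyLaced Γ a)
    (h : Γ.Adj i j) : T j (T i (Fₐ j)) = Fₐ i := by
  rw [hT.map_Fg_adj ha h, map_qBracket, hT.map_Fg_self, hT.map_Fg_adj ha h.symm]
  refine qBracket_qBracket_F qq_ne_zero qq_sub_inv_ne_zero (Kg_mul_Kinvg j) (Kinvg_mul_Kg j)
    ?_ ?_ ?_ (commute_Eg_Fg h.ne.symm).symm
  · simpa [ha.adj h.symm] using Kg_mul_Fg (a := a) (d := fun _ => 1) j i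
  · simpa [ha.self] using Kg_mul_Fg (a := a) (d := fun _ => 1) j j
  · simpa using Eg_mul_Fg_sub (a := a) (d := fun _ => 1) j

theorem map_map_Kg_adj (hT : IsBraid n a (fun _ => 1) T) (ha : IsSimplyLaced Γ a)
    (h : Γ.Adj i j) : T j (T i (Kₐ j)) = Kₐ i := by
  rw [hT.map_Kg_adj ha h, map_qBracket, hT.map_Kg_self ha, hT.map_Kg_adj ha h.symm]
  simp [qBracket, (commute_Kg i j).eq, ← mul_assoc, Kinvg_mul_Kg]

theorem map_Kinvg_far (hT : IsBraid n a (fun _ => 1) T) (ha : IsSimplyLaced Γ a) (hij : i ≠ j)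
    (h : ¬ Γ.Adj i j) : T i (Kinvₐ j) = Kinvₐ j :=
  map_Kinvg_eq_of_map_Kg_eq (φ := (T i : Uₐ →ₐ[𝔽] Uₐ)) (ψ := AlgHom.id 𝔽 Uₐ)
    (hT.map_Kg_far ha hij h)

theorem map_map_Kinvg_adj (hT : IsBraid n a (fun _ => 1) T) (ha : IsSimplyLaced Γ a)
    (h : Γ.Adj i j) : T j (T i (Kinvₐ j)) = Kinvₐ i :=
  map_Kinvg_eq_of_map_Kg_eq (φ := ((T i).trans (T j) : Uₐ →ₐ[𝔽] Uₐ)) (ψ := AlgHom.id 𝔽 Uₐ)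
    (hT.map_map_Kg_adj ha h)

theorem isLusztigFamily_Eg (hT : IsBraid n a (fun _ => 1) T) (ha : IsSimplyLaced Γ a) :
    IsLusztigFamily Γ 1 (-qq⁻¹) T Eₐ where
  commute := ha.commute_Eg
  map_far := hT.map_Eg_far ha
  map_adj := hT.map_Eg_adj ha
  map_map_adj := hT.map_map_Eg_adj ha
  map_map_self hij h := by
    rw [hT.map_Eg_self, map_neg, map_mul, hT.map_Kinvg_far ha hij.symm (mt SimpleGraph.Adj.symm h),
      hT.map_Fg_far ha hij.symm (mt SimpleGraph.Adj.symm h)]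
  map_map_map_self h := by
    rw [hT.map_Eg_self, hT.map_Eg_self, map_neg, map_neg, map_mul, map_mul,
      hT.map_map_Kinvg_adj ha h.symm, hT.map_map_Fg_adj ha h.symm]

theorem isLusztigFamily_Fg (hT : IsBraid n a (fun _ => 1) T) (ha : IsSimplyLaced Γ a) :
    IsLusztigFamily Γ (-qq) 1 T Fₐ where
  commute := ha.commute_Fg
  map_far := hT.map_Fg_far ha
  map_adj := hT.map_Fg_adj ha
  map_map_adj := hT.map_map_Fg_adj ha
  map_map_self hij h := by
    rw [hT.map_Fg_self, map_neg, map_mul, hT.map_Eg_far ha hij.symm (mt SimpleGraph.Adj.symm h),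
      hT.map_Kg_far ha hij.symm (mt SimpleGraph.Adj.symm h)]
  map_map_map_self h := by
    rw [hT.map_Fg_self, hT.map_Fg_self, map_neg, map_neg, map_mul, map_mul,
      hT.map_map_Eg_adj ha h.symm, hT.map_map_Kg_adj ha h.symm]

theorem isLusztigFamily_Kg (hT : IsBraid n a (fun _ => 1) T) (ha : IsSimplyLaced Γ a) :
    IsLusztigFamily Γ 1 (0 : 𝔽) T Kₐ where
  commute _ := commute_Kg _ _
  map_far := hT.map_Kg_far ha
  map_adj := hT.map_Kg_adj ha
  map_map_adj := hT.map_map_Kg_adj ha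
  map_map_self hij h := by
    rw [hT.map_Kg_self ha, hT.map_Kinvg_far ha hij.symm (mt SimpleGraph.Adj.symm h)]
  map_map_map_self h := by
    rw [hT.map_Kg_self ha, hT.map_Kg_self ha, hT.map_map_Kinvg_adj ha h.symm]

theorem commute_of_not_adj (hT : IsBraid n a (fun _ => 1) T) (ha : IsSimplyLaced Γ a)
    (h : ¬ Γ.Adj i j) : Commute (T i) (T j) := by
  rcases eq_or_ne i j with rfl | hij
  · exact Commute.refl _
  · exact algEquiv_ext ((hT.isLusztigFamily_Eg ha).map_map_comm hij h)
      ((hT.isLusztigFamily_Fg ha).map_map_comm hij h)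
      ((hT.isLusztigFamily_Kg ha).map_map_comm hij h)

theorem braid_of_adj (hT : IsBraid n a (fun _ => 1) T) (ha : IsSimplyLaced Γ a)
    (hΓ : Γ.CliqueFree 3) (h : Γ.Adj i j) : T i * T j * T i = T j * T i * T j :=
  algEquiv_ext ((hT.isLusztigFamily_Eg ha).map_map_map_braid hΓ h)
    ((hT.isLusztigFamily_Fg ha).map_map_map_braid hΓ h)
    ((hT.isLusztigFamily_Kg ha).map_map_map_braid hΓ h)

end IsBraid

end SimplyLaced

section BraidSystem

variable {ι κ A : Type*} [Ring A] [Algebra 𝔽 A]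

/-- Chevalley-type generators `E` together with braid automorphisms `T`, indexed by the vertices of
a simply laced Dynkin graph `Γ`: the part of the structure of `U_q(𝔤)` that governs PBW monomials.
Unlike `U_q(𝔤)` itself, it restricts to full subgraphs inside a fixed algebra. -/
structure IsBraidSystem (Γ : SimpleGraph ι) (E : ι → A) (T : ι → A ≃ₐ[𝔽] A) : Prop where
  commute : ∀ {i j}, ¬ Γ.Adj i j → Commute (E i) (E j)
  serre : ∀ {i j}, Γ.Adj i j →
    E i ^ 2 * E j - (qq + qq⁻¹) • (E i * E j * E i) + E j * E i ^ 2 = 0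
  map_far : ∀ {i j}, i ≠ j → ¬ Γ.Adj i j → T i (E j) = E j
  map_adj : ∀ {i j}, Γ.Adj i j → T i (E j) = qBracket 1 (-qq⁻¹) (E j) (E i)
  map_map_adj : ∀ {i j}, Γ.Adj i j → T j (T i (E j)) = E i
  commute_map : ∀ {i j}, ¬ Γ.Adj i j → Commute (T i) (T j)
  braid : ∀ {i j}, Γ.Adj i j → T i * T j * T i = T j * T i * T j

theorem IsBraid.isBraidSystem {n : ℕ} {Γ : SimpleGraph (Fin n)} {a : Fin n → Fin n → ℤ}
    {T : Fin n → U n a (fun _ => 1) ≃ₐ[𝔽] U n a (fun _ => 1)}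
    (hT : IsBraid n a (fun _ => 1) T) (ha : IsSimplyLaced Γ a) (hΓ : Γ.CliqueFree 3) :
    IsBraidSystem Γ (Eg n a fun _ => 1) T where
  commute := ha.commute_Eg
  serre := ha.serre_Eg
  map_far := hT.map_Eg_far ha
  map_adj := hT.map_Eg_adj ha
  map_map_adj := hT.map_map_Eg_adj ha
  commute_map := hT.commute_of_not_adj ha
  braid := hT.braid_of_adj ha hΓ

namespace IsBraidSystem

variable {Γ : SimpleGraph ι} {Γ' : SimpleGraph κ} {E : ι → A} {T : ι → A ≃ₐ[𝔽] A} {i j : ι}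

theorem comp_embedding (h : IsBraidSystem Γ E T) (f : Γ' ↪g Γ) :
    IsBraidSystem Γ' (E ∘ f) (T ∘ f) where
  commute hij := h.commute (mt f.map_adj_iff.mp hij)
  serre hij := h.serre (f.map_adj_iff.mpr hij)
  map_far hne hij := h.map_far (f.injective.ne hne) (mt f.map_adj_iff.mp hij)
  map_adj hij := h.map_adj (f.map_adj_iff.mpr hij)
  map_map_adj hij := h.map_map_adj (f.map_adj_iff.mpr hij)
  commute_map hij := h.commute_map (mt f.map_adj_iff.mp hij)
  braid hij := h.braid (f.map_adj_iff.mpr hij)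

theorem dividedPow_mul_dividedPow_of_adj (h : IsBraidSystem Γ E T) (hij : Γ.Adj i j) (m l : ℕ) :
    dividedPow (E j) m * dividedPow (E i) l =
      ∑ p ∈ antidiagonal l, straighteningTerm (E j) (E i) (T i (E j)) m p.1 p.2 := by
  rw [h.map_adj hij]
  refine dividedPow_mul_dividedPow ?_ ?_ ?_ m l
  · simp [qBracket]
  · exact mul_qBracket_left_of_serre qq_ne_zero (h.serre hij.symm)
  · exact mul_qBracket_right_of_serre qq_ne_zero (h.serre hij)

end IsBraidSystem

end BraidSystem

section TypeA

variable {n : ℕ}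

theorem pathGraph_cliqueFree_three (n : ℕ) : (SimpleGraph.pathGraph n).CliqueFree 3 := by
  intro s hs
  obtain ⟨i, j, k, hij, hik, hjk, -⟩ := SimpleGraph.is3Clique_iff.mp hs
  simp only [SimpleGraph.pathGraph_adj] at hij hik hjk
  lia

theorem isSimplyLaced_aTypeA (n : ℕ) : IsSimplyLaced (SimpleGraph.pathGraph n) (aTypeA n) where
  self i := if_pos rfl
  adj h := by
    rw [aTypeA, if_neg h.ne, if_pos (SimpleGraph.pathGraph_adj.mp h)]
  far hij h := by
    rw [aTypeA, if_neg hij, if_neg (mt SimpleGraph.pathGraph_adj.mpr h)]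

/-- The inclusion of the type `A_n` diagram into that of type `A_{n+1}` omitting the last vertex. -/
def pathGraphCastSucc (n : ℕ) : SimpleGraph.pathGraph n ↪g SimpleGraph.pathGraph (n + 1) where
  toFun := Fin.castSucc
  inj' := Fin.castSucc_injective n
  map_rel_iff' := by simp [SimpleGraph.pathGraph_adj]

theorem pathGraph_adj_last : (SimpleGraph.pathGraph (n + 2)).Adj (Fin.last (n + 1))
    (Fin.last n).castSucc := by
  simp [SimpleGraph.pathGraph_adj]

theorem not_pathGraph_adj_last (i : Fin n) :
    ¬ (SimpleGraph.pathGraph (n + 2)).Adj (Fin.last (n + 1)) i.castSucc.castSucc := by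
  have := i.isLt
  simp only [SimpleGraph.pathGraph_adj, Fin.val_last, Fin.val_castSucc]
  lia

end TypeA

section Coxeter

variable {n : ℕ} {A : Type*} [Ring A] [Algebra 𝔽 A]

/-- The reduced word `s_n s_{n-1} ⋯ s_1` of a Coxeter element of type `A_n`. -/
def coxeterWord (n : ℕ) : List (Fin n) := (List.finRange n).reverse

theorem coxeterWord_succ (n : ℕ) :
    coxeterWord (n + 1) = Fin.last n :: (coxeterWord n).map Fin.castSucc := by
  simp [coxeterWord, List.finRange_succ_last]

theorem length_coxeterWord (n : ℕ) : (coxeterWord n).length = n := by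
  simp [coxeterWord]

/-- The automorphism `T_n T_{n-1} ⋯ T_1` lifting the Coxeter element. -/
def coxeter (T : Fin n → A ≃ₐ[𝔽] A) : A ≃ₐ[𝔽] A := ((coxeterWord n).map T).prod

theorem coxeter_succ (T : Fin (n + 1) → A ≃ₐ[𝔽] A) :
    coxeter T = T (Fin.last n) * coxeter (T ∘ Fin.castSucc) := by
  simp [coxeter, coxeterWord_succ]

theorem coxeter_apply_of_forall_apply_eq {T : Fin n → A ≃ₐ[𝔽] A} {x : A} (h : ∀ i, T i x = x) :
    coxeter T x = x := by
  have hmem : coxeter T ∈ MulAction.stabilizer (A ≃ₐ[𝔽] A) x :=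
    Subgroup.list_prod_mem _ fun φ hφ => by
      obtain ⟨i, -, rfl⟩ := List.mem_map.mp hφ
      exact h i
  exact hmem

theorem commute_coxeter {T : Fin n → A ≃ₐ[𝔽] A} {φ : A ≃ₐ[𝔽] A} (h : ∀ i, Commute (T i) φ) :
    Commute (coxeter T) φ :=
  Commute.list_prod_left _ _ fun ψ hψ => by
    obtain ⟨i, -, rfl⟩ := List.mem_map.mp hψ
    exact h i

namespace IsBraidSystem

theorem comp_castSucc {E : Fin (n + 1) → A} {T : Fin (n + 1) → A ≃ₐ[𝔽] A}
    (h : IsBraidSystem (SimpleGraph.pathGraph (n + 1)) E T) :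
    IsBraidSystem (SimpleGraph.pathGraph n) (E ∘ Fin.castSucc) (T ∘ Fin.castSucc) :=
  h.comp_embedding (pathGraphCastSucc n)

theorem coxeter_apply_succ {n : ℕ} {E : Fin (n + 1) → A} {T : Fin (n + 1) → A ≃ₐ[𝔽] A}
    (h : IsBraidSystem (SimpleGraph.pathGraph (n + 1)) E T) (i : Fin n) :
    coxeter T (E i.succ) = E i.castSucc := by
  induction n with
  | zero => exact i.elim0
  | succ n ih =>
    rw [coxeter_succ, AlgEquiv.mul_apply]
    cases i using Fin.lastCases with
    | last =>
      have hfix : ∀ i, ((T ∘ Fin.castSucc) ∘ Fin.castSucc) i (E (Fin.last n).succ) =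
          E (Fin.last n).succ := fun i =>
        h.map_far i.castSucc.castSucc_lt_last.ne (not_pathGraph_adj_last i ∘ .symm)
      rw [coxeter_succ, AlgEquiv.mul_apply, coxeter_apply_of_forall_apply_eq hfix]
      exact h.map_map_adj pathGraph_adj_last.symm
    | cast i =>
      rw [← Fin.castSucc_succ]
      exact (congrArg _ (ih h.comp_castSucc i)).trans
        (h.map_far i.castSucc.castSucc_lt_last.ne' (not_pathGraph_adj_last i))

theorem coxeter_mul_succ {n : ℕ} {E : Fin (n + 1) → A} {T : Fin (n + 1) → A ≃ₐ[𝔽] A}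
    (h : IsBraidSystem (SimpleGraph.pathGraph (n + 1)) E T) (i : Fin n) :
    coxeter T * T i.succ = T i.castSucc * coxeter T := by
  induction n with
  | zero => exact i.elim0
  | succ n ih =>
    cases i using Fin.lastCases with
    | last =>
      have hlast : Commute (coxeter ((T ∘ Fin.castSucc) ∘ Fin.castSucc)) (T (Fin.last (n + 1))) :=
        commute_coxeter fun i => (h.commute_map (not_pathGraph_adj_last i)).symm
      have hbraid := h.braid pathGraph_adj_last
      rw [coxeter_succ, coxeter_succ, Fin.succ_last, mul_assoc, mul_assoc, hlast.eq]
      simp only [← mul_assoc, Function.comp_apply]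
      rw [hbraid]
    | cast i =>
      have hfar := h.commute_map (not_pathGraph_adj_last i)
      have hrec := ih h.comp_castSucc i
      rw [Function.comp_apply, Function.comp_apply] at hrec
      rw [coxeter_succ, ← Fin.castSucc_succ, mul_assoc, hrec, ← mul_assoc, hfar.eq, mul_assoc]

end IsBraidSystem

end Coxeter

section PBWMonomials

variable {ι κ A : Type*} [Ring A] [Algebra 𝔽 A]

/-- The PBW monomial of the word `w` with exponents `cs`, for an arbitrary family of generators `E`
and of automorphisms `T`. -/
def pbwMonomial (E : ι → A) (T : ι → A ≃ₐ[𝔽] A) : List ι → List ℕ → A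
  | _, [] => 1
  | [], _ => 1
  | i :: w, c :: cs => dividedPow (E i) c * T i (pbwMonomial E T w cs)

variable {E : ι → A} {T : ι → A ≃ₐ[𝔽] A}

theorem pbwMonomial_nil (cs : List ℕ) : pbwMonomial E T [] cs = 1 := by
  cases cs <;> rfl

theorem pbwMonomial_cons (i : ι) (w : List ι) (c : ℕ) (cs : List ℕ) :
    pbwMonomial E T (i :: w) (c :: cs) = dividedPow (E i) c * T i (pbwMonomial E T w cs) := rfl

theorem pbwMonomial_replicate_zero (w : List ι) (r : ℕ) :
    pbwMonomial E T w (List.replicate r 0) = 1 := by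
  induction r generalizing w with
  | zero => cases w <;> rfl
  | succ r ih =>
    cases w with
    | nil => rfl
    | cons i w => rw [List.replicate_succ, pbwMonomial_cons, ih]; simp

theorem pbwMonomial_append {w : List ι} {cs : List ℕ} (h : cs.length = w.length) (w' : List ι)
    (cs' : List ℕ) :
    pbwMonomial E T (w ++ w') (cs ++ cs') =
      pbwMonomial E T w cs * (w.map T).prod (pbwMonomial E T w' cs') := by
  induction w generalizing cs with
  | nil =>
    obtain rfl := List.length_eq_zero_iff.mp h
    simp [pbwMonomial]
  | cons i w ih =>
    obtain ⟨c, cs, rfl⟩ := List.exists_cons_of_length_eq_add_one h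
    rw [List.cons_append, List.cons_append, pbwMonomial_cons, pbwMonomial_cons,
      ih (Nat.succ_injective h), map_mul, List.map_cons, List.prod_cons, AlgEquiv.mul_apply,
      mul_assoc]

theorem map_pbwMonomial {E' : κ → A} {T' : κ → A ≃ₐ[𝔽] A} {φ : A ≃ₐ[𝔽] A} {f : ι → κ}
    (hE : ∀ i, φ (E i) = E' (f i)) (hT : ∀ i, φ * T i = T' (f i) * φ) (w : List ι)
    (cs : List ℕ) :
    φ (pbwMonomial E T w cs) = pbwMonomial E' T' (w.map f) cs := by
  induction w generalizing cs with
  | nil => simp [pbwMonomial_nil]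
  | cons i w ih =>
    cases cs with
    | nil => exact map_one φ
    | cons c cs =>
      have hdiv : φ (dividedPow (E i) c) = dividedPow (E' (f i)) c :=
        (map_dividedPow (φ : A →ₐ[𝔽] A) (E i) c).trans (by rw [← hE]; rfl)
      rw [List.map_cons, pbwMonomial_cons, pbwMonomial_cons, map_mul, hdiv, ← AlgEquiv.mul_apply,
        hT, AlgEquiv.mul_apply, ih]

theorem pbwMonomial_map (f : κ → ι) (w : List κ) (cs : List ℕ) :
    pbwMonomial E T (w.map f) cs = pbwMonomial (E ∘ f) (T ∘ f) w cs :=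
  (map_pbwMonomial (E' := E) (T' := T) (φ := 1) (f := f) (fun _ => rfl) (fun _ => rfl) w cs).symm

theorem pbw_eq_pbwMonomial {n : ℕ} {a : Fin n → Fin n → ℤ}
    (T : Fin n → U n a (fun _ => 1) ≃ₐ[𝔽] U n a (fun _ => 1)) (w : List (Fin n)) (cs : List ℕ) :
    pbw n a (fun _ => 1) T w cs = pbwMonomial (Eg n a fun _ => 1) T w cs := by
  induction w generalizing cs with
  | nil => cases cs <;> rfl
  | cons i w ih =>
    cases cs with
    | nil => rfl
    | cons c cs => rw [pbw, ih, pbwMonomial_cons, Ediv_eq_dividedPow]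

theorem IsBraidSystem.pbwMonomial_coxeterWord_append {n : ℕ} {E : Fin (n + 1) → A}
    {T : Fin (n + 1) → A ≃ₐ[𝔽] A} (h : IsBraidSystem (SimpleGraph.pathGraph (n + 1)) E T)
    {cs : List ℕ} (hcs : cs.length = n + 1) (w : List (Fin n)) (cs' : List ℕ) :
    pbwMonomial E T (coxeterWord (n + 1) ++ w.map Fin.succ) (cs ++ cs') =
      pbwMonomial E T (coxeterWord (n + 1)) cs *
        pbwMonomial (E ∘ Fin.castSucc) (T ∘ Fin.castSucc) w cs' := by
  have hlen : cs.length = (coxeterWord (n + 1)).length := hcs.trans (length_coxeterWord _).symm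
  rw [pbwMonomial_append hlen, pbwMonomial_map Fin.succ]
  congr 1
  exact (map_pbwMonomial h.coxeter_apply_succ h.coxeter_mul_succ w cs').trans
    (pbwMonomial_map Fin.castSucc w cs')

end PBWMonomials

section Words

theorem jwordA_succ (n : ℕ) :
    jwordA (n + 1) = List.finRange (n + 1) ++ (jwordA n).map Fin.castSucc := by
  have htake : ∀ m ∈ (List.range n).reverse, (List.finRange (n + 1)).take (m + 1) =
      ((List.finRange n).take (m + 1)).map Fin.castSucc := by
    intro m hm
    have hmn : m < n := List.mem_range.mp (List.mem_reverse.mp hm)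
    rw [List.finRange_succ_last, List.take_append_of_le_length (by simpa using hmn), List.map_take]
  rw [jwordA, List.range_succ, List.reverse_append, List.reverse_singleton, List.singleton_append,
    List.flatMap_cons, List.take_of_length_le (by simp), List.flatMap_congr htake, jwordA,
    List.map_flatMap]

theorem iwordA_succ (n : ℕ) :
    iwordA (n + 1) = coxeterWord (n + 1) ++ (iwordA n).map Fin.succ := by
  rw [iwordA, jwordA_succ, List.map_append, coxeterWord, List.finRange_reverse, iwordA,
    List.map_map, List.map_map]
  congr 1
  exact List.map_congr_left fun i _ => Fin.rev_castSucc i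

theorem length_iwordA (n : ℕ) : (iwordA n).length = (jwordA n).length := List.length_map _

theorem two_mul_length_jwordA (n : ℕ) : 2 * (jwordA n).length = n * (n + 1) := by
  induction n with
  | zero => rfl
  | succ n ih =>
    rw [jwordA_succ, List.length_append, List.length_finRange, List.length_map, mul_add, ih]
    ring

end Words

section OrderedMonomials

variable {n : ℕ} {A : Type*} [Ring A] [Algebra 𝔽 A]

/-- The monomial `E_1^{(k_1)} ⋯ E_n^{(k_n)}` in the generators taken in increasing order. -/
def orderedMonomial (E : Fin n → A) (k : Fin n → ℕ) : A :=
  (List.ofFn fun i => dividedPow (E i) (k i)).prod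

/-- The `ℤ[q,q⁻¹]`-span of the monomials `E_1^{(k_1)} ⋯ E_n^{(k_n)}`. -/
def orderedSpan (E : Fin n → A) : Submodule 𝒜 A :=
  Submodule.span 𝒜 (Set.range (orderedMonomial E))

theorem orderedMonomial_snoc (E : Fin (n + 1) → A) (k : Fin n → ℕ) (m : ℕ) :
    orderedMonomial E (Fin.snoc k m) =
      orderedMonomial (E ∘ Fin.castSucc) k * dividedPow (E (Fin.last n)) m := by
  rw [orderedMonomial, List.ofFn_succ', List.prod_concat, Fin.snoc_last]
  simp only [Fin.snoc_castSucc]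
  rfl

theorem orderedMonomial_mem_orderedSpan (E : Fin n → A) (k : Fin n → ℕ) :
    orderedMonomial E k ∈ orderedSpan E :=
  Submodule.subset_span ⟨k, rfl⟩

theorem one_mem_orderedSpan (E : Fin n → A) : 1 ∈ orderedSpan E := by
  have hone : orderedMonomial E 0 = 1 := by simp [orderedMonomial]
  exact hone ▸ orderedMonomial_mem_orderedSpan E 0

theorem mul_zdividedPow_mem_orderedSpan {E : Fin (n + 1) → A} {x : A}
    (hx : x ∈ orderedSpan (E ∘ Fin.castSucc)) (z : ℤ) :
    x * zdividedPow (E (Fin.last n)) z ∈ orderedSpan E := by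
  cases z with
  | negSucc m => exact (mul_zero x).symm ▸ Submodule.zero_mem _
  | ofNat m =>
    induction hx using Submodule.span_induction with
    | mem x hx =>
      obtain ⟨k, rfl⟩ := hx
      exact orderedMonomial_snoc E k m ▸ orderedMonomial_mem_orderedSpan E _
    | zero => exact (zero_mul (M₀ := A) _).symm ▸ Submodule.zero_mem _
    | add x y _ _ hx hy => exact (add_mul x y _).symm ▸ Submodule.add_mem _ hx hy
    | smul r x _ hx => exact (smul_mul_assoc r x _).symm ▸ Submodule.smul_mem _ r hx

namespace IsBraidSystem

variable {E : Fin (n + 2) → A} {T : Fin (n + 2) → A ≃ₐ[𝔽] A}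

theorem map_last_orderedMonomial (h : IsBraidSystem (SimpleGraph.pathGraph (n + 2)) E T)
    (k : Fin n → ℕ) :
    T (Fin.last (n + 1)) (orderedMonomial ((E ∘ Fin.castSucc) ∘ Fin.castSucc) k) =
      orderedMonomial ((E ∘ Fin.castSucc) ∘ Fin.castSucc) k := by
  have hfix : ∀ (i : Fin n) (m : ℕ), T (Fin.last (n + 1)) (dividedPow (E i.castSucc.castSucc) m) =
      dividedPow (E i.castSucc.castSucc) m := fun i m =>
    (map_dividedPow (T (Fin.last (n + 1)) : A →ₐ[𝔽] A) _ m).trans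
      (congrArg (dividedPow · m)
        (h.map_far i.castSucc.castSucc_lt_last.ne' (not_pathGraph_adj_last i)))
  simp [orderedMonomial, map_list_prod, List.map_ofFn, Function.comp_def, hfix]

theorem map_last_of_mem_orderedSpan (h : IsBraidSystem (SimpleGraph.pathGraph (n + 2)) E T)
    {x : A} (hx : x ∈ orderedSpan ((E ∘ Fin.castSucc) ∘ Fin.castSucc)) :
    T (Fin.last (n + 1)) x = x := by
  induction hx using Submodule.span_induction with
  | mem x hx =>
    obtain ⟨k, rfl⟩ := hx
    exact h.map_last_orderedMonomial k
  | zero => exact map_zero _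
  | add x y _ _ hx hy => rw [map_add, hx, hy]
  | smul r x _ hx => exact (map_smul _ (r : 𝔽) x).trans (congrArg _ hx)

theorem commute_orderedMonomial_last (h : IsBraidSystem (SimpleGraph.pathGraph (n + 2)) E T)
    (k : Fin n → ℕ) (u : ℕ) :
    Commute (orderedMonomial ((E ∘ Fin.castSucc) ∘ Fin.castSucc) k)
      (dividedPow (E (Fin.last (n + 1))) u) :=
  Commute.list_prod_left _ _ fun x hx => by
    obtain ⟨i, rfl⟩ := List.mem_ofFn.mp hx
    exact (commute_dividedPow (h.commute (not_pathGraph_adj_last i)) u (k i)).symm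

theorem orderedMonomial_mul_straighteningTerm
    (h : IsBraidSystem (SimpleGraph.pathGraph (n + 2)) E T) (k : Fin n → ℕ) (m t u : ℕ) :
    orderedMonomial ((E ∘ Fin.castSucc) ∘ Fin.castSucc) k *
        straighteningTerm (E (Fin.last n).castSucc) (E (Fin.last (n + 1)))
          (T (Fin.last (n + 1)) (E (Fin.last n).castSucc)) m t u =
      qq ^ (-(((m : ℤ) - t) * u)) •
        (dividedPow (E (Fin.last (n + 1))) u *
          T (Fin.last (n + 1)) (orderedMonomial (E ∘ Fin.castSucc) (Fin.snoc k t)) *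
          zdividedPow (E (Fin.last n).castSucc) ((m : ℤ) - t)) := by
  have hmap : T (Fin.last (n + 1)) (dividedPow (E (Fin.last n).castSucc) t) =
      dividedPow (T (Fin.last (n + 1)) (E (Fin.last n).castSucc)) t :=
    map_dividedPow (T (Fin.last (n + 1)) : A →ₐ[𝔽] A) _ t
  rw [straighteningTerm, mul_smul_comm, ← mul_assoc, ← mul_assoc,
    (h.commute_orderedMonomial_last k u).eq, orderedMonomial_snoc, map_mul,
    h.map_last_orderedMonomial, Function.comp_apply, hmap, ← mul_assoc]

theorem orderedMonomial_snoc_snoc (h : IsBraidSystem (SimpleGraph.pathGraph (n + 2)) E T)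
    (k : Fin n → ℕ) (m l : ℕ) :
    orderedMonomial E (Fin.snoc (Fin.snoc k m : Fin (n + 1) → ℕ) l) =
      ∑ p ∈ antidiagonal l, qq ^ (-(((m : ℤ) - p.1) * p.2)) •
        (dividedPow (E (Fin.last (n + 1))) p.2 *
          T (Fin.last (n + 1)) (orderedMonomial (E ∘ Fin.castSucc) (Fin.snoc k p.1)) *
          zdividedPow (E (Fin.last n).castSucc) ((m : ℤ) - p.1)) := by
  rw [orderedMonomial_snoc, orderedMonomial_snoc, mul_assoc, Function.comp_apply,
    h.dividedPow_mul_dividedPow_of_adj pathGraph_adj_last, Finset.mul_sum]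
  exact Finset.sum_congr rfl fun p _ => h.orderedMonomial_mul_straighteningTerm k m p.1 p.2

end IsBraidSystem

end OrderedMonomials

section Expansion

variable {ι A : Type*} [Ring A] [Algebra 𝔽 A]

/-- The `ℤ[q,q⁻¹]`-span of the PBW monomials of the word `w` with exponents in `S`. -/
def pbwSpan (E : ι → A) (T : ι → A ≃ₐ[𝔽] A) (w : List ι) (S : Set (List ℕ)) : Submodule 𝒜 A :=
  Submodule.span 𝒜 (pbwMonomial E T w '' {cs ∈ S | cs.length = w.length})

theorem pbwMonomial_mem_pbwSpan {E : ι → A} {T : ι → A ≃ₐ[𝔽] A} {w : List ι} {S : Set (List ℕ)}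
    {cs : List ℕ} (hS : cs ∈ S) (hcs : cs.length = w.length) :
    pbwMonomial E T w cs ∈ pbwSpan E T w S :=
  Submodule.subset_span ⟨cs, ⟨hS, hcs⟩, rfl⟩

theorem dividedPow_mul_mem_pbwSpan {κ : Type*} {E : ι → A} {T : ι → A ≃ₐ[𝔽] A} {f : κ → ι}
    {w : List κ} {S S' : Set (List ℕ)} {u : ℕ} (hS : ∀ cs ∈ S, u :: cs ∈ S') (i : ι) {x : A}
    (hx : x ∈ pbwSpan (E ∘ f) (T ∘ f) w S) :
    dividedPow (E i) u * T i x ∈ pbwSpan E T (i :: w.map f) S' := by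
  induction hx using Submodule.span_induction with
  | mem x hx =>
    obtain ⟨cs, ⟨hcs, hlen⟩, rfl⟩ := hx
    rw [← pbwMonomial_map, ← pbwMonomial_cons]
    exact pbwMonomial_mem_pbwSpan (hS cs hcs) (by simpa using hlen)
  | zero => simp
  | add x y _ _ hx hy => simpa [mul_add] using Submodule.add_mem _ hx hy
  | smul r x _ hx =>
    have hsmul : dividedPow (E i) u * T i (r • x) = r • (dividedPow (E i) u * T i x) :=
      (congrArg _ (map_smul (T i) (r : 𝔽) x)).trans (mul_smul_comm (r : 𝔽) _ _)
    exact hsmul ▸ Submodule.smul_mem _ r hx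

theorem qq_zpow_smul_mem {M : Submodule 𝒜 A} {x : A} (hx : x ∈ M) (z : ℤ) : qq ^ z • x ∈ M :=
  M.smul_mem (⟨qq ^ z, qq_zpow_mem_𝒜 z⟩ : 𝒜) hx

/-- The exponents `k_p = c_n + c_{n-1} + ⋯ + c_{n-p+1}`, with `p` and the indices of `c` counted
from `0` in Lean. -/
def tailSums {n : ℕ} (c : Fin n → ℕ) (p : Fin n) : ℕ := ∑ m ∈ Finset.Ici p.rev, c m

theorem tailSums_succ {n : ℕ} (c : Fin (n + 1) → ℕ) :
    tailSums c = Fin.snoc (tailSums (Fin.tail c)) (∑ i, c i) := by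
  ext p
  cases p using Fin.lastCases with
  | last => rw [Fin.snoc_last, tailSums, Fin.rev_last, ← bot_eq_zero, Finset.Ici_bot]
  | cast p =>
    rw [Fin.snoc_castSucc, tailSums, tailSums, Fin.rev_castSucc, ← Fin.map_succEmb_Ici,
      Finset.sum_map]
    rfl

namespace IsBraidSystem

theorem dividedPow_mul_mul_zdividedPow_mem {n : ℕ} {E : Fin (n + 2) → A}
    {T : Fin (n + 2) → A ≃ₐ[𝔽] A} (h : IsBraidSystem (SimpleGraph.pathGraph (n + 2)) E T)
    {S S' : Set (List ℕ)} {u : ℕ} (hS : ∀ cs ∈ S, u :: cs ∈ S') (z : ℤ) {x : A}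
    (hx : x ∈ pbwSpan (E ∘ Fin.castSucc) (T ∘ Fin.castSucc) (coxeterWord (n + 1)) S *
      orderedSpan ((E ∘ Fin.castSucc) ∘ Fin.castSucc)) :
    dividedPow (E (Fin.last (n + 1))) u * T (Fin.last (n + 1)) x *
        zdividedPow (E (Fin.last n).castSucc) z ∈
      pbwSpan E T (coxeterWord (n + 2)) S' * orderedSpan (E ∘ Fin.castSucc) := by
  induction hx using Submodule.mul_induction_on' with
  | mem_mul_mem x hx y hy =>
    rw [map_mul, h.map_last_of_mem_orderedSpan hy, ← mul_assoc, mul_assoc _ y, coxeterWord_succ]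
    exact Submodule.mul_mem_mul (dividedPow_mul_mem_pbwSpan hS _ hx)
      (mul_zdividedPow_mem_orderedSpan (E := E ∘ Fin.castSucc) hy z)
  | add x _ y _ hx hy => simpa [mul_add, add_mul] using Submodule.add_mem _ hx hy

theorem orderedMonomial_mem_pbwSpan_mul_orderedSpan {n : ℕ} {E : Fin (n + 1) → A}
    {T : Fin (n + 1) → A ≃ₐ[𝔽] A} (h : IsBraidSystem (SimpleGraph.pathGraph (n + 1)) E T)
    (k : Fin (n + 1) → ℕ) :
    orderedMonomial E k ∈
      pbwSpan E T (coxeterWord (n + 1)) Set.univ * orderedSpan (E ∘ Fin.castSucc) := by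
  induction n with
  | zero =>
    have hk : orderedMonomial E k = pbwMonomial E T (coxeterWord 1) [k 0] * 1 := by
      rw [coxeterWord_succ, pbwMonomial_cons]
      simp [orderedMonomial, pbwMonomial]
    rw [hk]
    exact Submodule.mul_mem_mul (pbwMonomial_mem_pbwSpan (Set.mem_univ _) rfl)
      (one_mem_orderedSpan _)
  | succ n ih =>
    cases k using Fin.snocCases with | _ k l => ?_
    cases k using Fin.snocCases with | _ k m => ?_
    rw [h.orderedMonomial_snoc_snoc]
    exact Submodule.sum_mem _ fun p _ => qq_zpow_smul_mem
      (h.dividedPow_mul_mul_zdividedPow_mem (S := Set.univ) (fun _ _ => Set.mem_univ _) _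
        (ih h.comp_castSucc _)) _

end IsBraidSystem

end Expansion

section LeadingTerm

variable {A : Type*} [Ring A] [Algebra 𝔽 A] {n : ℕ}

namespace IsBraidSystem

theorem orderedMonomial_snoc_snoc_sub_mem {E : Fin (n + 2) → A} {T : Fin (n + 2) → A ≃ₐ[𝔽] A}
    (h : IsBraidSystem (SimpleGraph.pathGraph (n + 2)) E T) (k : Fin n → ℕ) (l m : ℕ)
    {S : Set (List ℕ)} (hS : ∀ u > l, ∀ cs, u :: cs ∈ S) :
    orderedMonomial E (Fin.snoc (Fin.snoc k m : Fin (n + 1) → ℕ) (l + m)) -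
        dividedPow (E (Fin.last (n + 1))) l *
          T (Fin.last (n + 1)) (orderedMonomial (E ∘ Fin.castSucc) (Fin.snoc k m)) ∈
      pbwSpan E T (coxeterWord (n + 2)) S * orderedSpan (E ∘ Fin.castSucc) := by
  have hml : (m, l) ∈ antidiagonal (l + m) := mem_antidiagonal.mpr (add_comm m l)
  rw [h.orderedMonomial_snoc_snoc, ← Finset.add_sum_erase _ _ hml]
  simp only [sub_self, zero_mul, neg_zero, zpow_zero, one_smul, zdividedPow_zero, mul_one,
    add_sub_cancel_left]
  refine Submodule.sum_mem _ fun p hp => ?_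
  obtain ⟨hne, hadd⟩ := Finset.mem_erase.mp hp
  replace hadd := mem_antidiagonal.mp hadd
  rcases lt_trichotomy p.1 m with hlt | heq | hgt
  · exact qq_zpow_smul_mem (h.dividedPow_mul_mul_zdividedPow_mem (S := Set.univ)
      (fun cs _ => hS _ (by omega) cs) _
      (h.comp_castSucc.orderedMonomial_mem_pbwSpan_mul_orderedSpan _)) _
  · exact absurd (Prod.ext heq (by dsimp only; omega)) hne
  · rw [zdividedPow_of_neg _ (by omega), mul_zero, smul_zero]
    exact Submodule.zero_mem _

theorem orderedMonomial_tailSums_sub_mem {E : Fin (n + 1) → A} {T : Fin (n + 1) → A ≃ₐ[𝔽] A}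
    (h : IsBraidSystem (SimpleGraph.pathGraph (n + 1)) E T) (c : Fin (n + 1) → ℕ) :
    orderedMonomial E (tailSums c) - pbwMonomial E T (coxeterWord (n + 1)) (List.ofFn c) ∈
      pbwSpan E T (coxeterWord (n + 1)) {cs | List.ofFn c < cs} *
        orderedSpan (E ∘ Fin.castSucc) := by
  induction n with
  | zero =>
    have hlead : orderedMonomial E (tailSums c) =
        pbwMonomial E T (coxeterWord 1) (List.ofFn c) := by
      rw [tailSums_succ, orderedMonomial_snoc, coxeterWord_succ, List.ofFn_succ, pbwMonomial_cons]
      simp [orderedMonomial, pbwMonomial]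
    rw [hlead, sub_self]
    exact Submodule.zero_mem _
  | succ n ih =>
    have hlead := h.dividedPow_mul_mul_zdividedPow_mem (S' := {cs | List.ofFn c < cs}) (u := c 0)
      (fun cs hcs => by
        rw [Set.mem_ofPred_eq, List.ofFn_succ, List.cons_lt_cons_iff]
        exact Or.inr ⟨rfl, hcs⟩) 0 (ih h.comp_castSucc (Fin.tail c))
    have hrest := h.orderedMonomial_snoc_snoc_sub_mem (tailSums (Fin.tail (Fin.tail c))) (c 0)
      (∑ i, Fin.tail c i) (S := {cs | List.ofFn c < cs}) fun u hu cs => by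
        rw [Set.mem_ofPred_eq, List.ofFn_succ, List.cons_lt_cons_iff]
        exact Or.inl hu
    have hpbw : pbwMonomial E T (coxeterWord (n + 2)) (List.ofFn c) =
        dividedPow (E (Fin.last (n + 1))) (c 0) * T (Fin.last (n + 1))
          (pbwMonomial (E ∘ Fin.castSucc) (T ∘ Fin.castSucc) (coxeterWord (n + 1))
            (List.ofFn (Fin.tail c))) := by
      rw [coxeterWord_succ, List.ofFn_succ, pbwMonomial_cons, pbwMonomial_map]
      rfl
    rw [zdividedPow_zero, mul_one, map_sub, mul_sub, ← hpbw] at hlead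
    rw [← tailSums_succ] at hrest
    rw [tailSums_succ, Fin.sum_univ_succ, ← sub_add_sub_cancel]
    exact Submodule.add_mem _ hrest hlead

end IsBraidSystem

end LeadingTerm

section LongestWord

variable {A : Type*} [Ring A] [Algebra 𝔽 A] {n : ℕ}

theorem append_lt_append_of_length_eq {α : Type*} [LT α] {l l' : List α}
    (hlen : l.length = l'.length) (hlt : l < l') (s t : List α) : l ++ s < l' ++ t := by
  induction hlt with
  | nil => simp at hlen
  | rel hab => exact List.Lex.rel hab
  | cons _ ih => exact List.Lex.cons (ih (Nat.succ_injective hlen))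

namespace IsBraidSystem

theorem pbwSpan_mul_pbwSpan_le {E : Fin (n + 1) → A} {T : Fin (n + 1) → A ≃ₐ[𝔽] A}
    (h : IsBraidSystem (SimpleGraph.pathGraph (n + 1)) E T) (w : List (Fin n))
    {S S' : Set (List ℕ)} (hS : ∀ cs ∈ S, cs.length = n + 1 → ∀ cs', cs ++ cs' ∈ S') :
    pbwSpan E T (coxeterWord (n + 1)) S *
        pbwSpan (E ∘ Fin.castSucc) (T ∘ Fin.castSucc) w Set.univ ≤
      pbwSpan E T (coxeterWord (n + 1) ++ w.map Fin.succ) S' := by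
  rw [pbwSpan, pbwSpan, Submodule.span_mul_span, Submodule.span_le]
  rintro _ ⟨_, ⟨cs, ⟨hcs, hlen⟩, rfl⟩, _, ⟨cs', ⟨-, hlen'⟩, rfl⟩, rfl⟩
  have hlen'' := hlen.trans (length_coxeterWord (n + 1))
  dsimp only
  rw [← h.pbwMonomial_coxeterWord_append hlen'']
  exact pbwMonomial_mem_pbwSpan (hS cs hcs hlen'' cs') (by simp [hlen, hlen'])

theorem orderedSpan_le_pbwSpan {E : Fin n → A} {T : Fin n → A ≃ₐ[𝔽] A}
    (h : IsBraidSystem (SimpleGraph.pathGraph n) E T) :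
    orderedSpan E ≤ pbwSpan E T (iwordA n) Set.univ := by
  rw [orderedSpan, Submodule.span_le]
  rintro _ ⟨k, rfl⟩
  induction n with
  | zero => exact pbwMonomial_mem_pbwSpan (cs := []) (Set.mem_univ _) rfl
  | succ n ih =>
    have hle : orderedSpan (E ∘ Fin.castSucc) ≤
        pbwSpan (E ∘ Fin.castSucc) (T ∘ Fin.castSucc) (iwordA n) Set.univ := by
      rw [orderedSpan, Submodule.span_le]
      rintro _ ⟨k, rfl⟩
      exact ih h.comp_castSucc k
    rw [iwordA_succ]
    exact h.pbwSpan_mul_pbwSpan_le _ (fun _ _ _ _ => Set.mem_univ _)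
      (mul_le_mul_right hle _ (h.orderedMonomial_mem_pbwSpan_mul_orderedSpan k))

theorem orderedMonomial_tailSums_sub_mem_pbwSpan {E : Fin n → A} {T : Fin n → A ≃ₐ[𝔽] A}
    (h : IsBraidSystem (SimpleGraph.pathGraph n) E T) (c : Fin n → ℕ) (r : ℕ) :
    orderedMonomial E (tailSums c) -
        pbwMonomial E T (iwordA n) (List.ofFn c ++ List.replicate r 0) ∈
      pbwSpan E T (iwordA n) {cs | List.ofFn c ++ List.replicate r 0 < cs} := by
  cases n with
  | zero =>
    have hlead : orderedMonomial E (tailSums c) =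
        pbwMonomial E T (iwordA 0) (List.ofFn c ++ List.replicate r 0) :=
      (pbwMonomial_nil _).symm
    rw [hlead, sub_self]
    exact Submodule.zero_mem _
  | succ n =>
    rw [iwordA_succ, h.pbwMonomial_coxeterWord_append List.length_ofFn,
      pbwMonomial_replicate_zero, mul_one]
    exact h.pbwSpan_mul_pbwSpan_le _
      (fun cs hcs hlen cs' =>
        append_lt_append_of_length_eq (List.length_ofFn.trans hlen.symm) hcs _ cs')
      (mul_le_mul_right h.comp_castSucc.orderedSpan_le_pbwSpan _
        (h.orderedMonomial_tailSums_sub_mem c))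

end IsBraidSystem

end LongestWord

section Coordinates

variable {n : ℕ}

theorem mono_ofFn {m : ℕ} (a : Fin n → Fin n → ℤ) (f : Fin m → Fin n) (k : Fin m → ℕ) :
    mono n a (fun _ => 1) (List.ofFn f) (List.ofFn k) =
      orderedMonomial (Eg n a (fun _ => 1) ∘ f) k := by
  induction m with
  | zero => rfl
  | succ m ih =>
    rw [List.ofFn_succ, List.ofFn_succ, mono, ih, Ediv_eq_dividedPow, orderedMonomial,
      orderedMonomial, List.ofFn_succ, List.prod_cons]
    rfl

theorem tailSums_eq_sum_Icc (g : ℕ → ℕ) (p : Fin n) :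
    tailSums (fun i : Fin n => g i) p = ∑ m ∈ Finset.Icc (n - 1 - p) (n - 1), g m := by
  have himage : (Finset.Ici p.rev).map Fin.valEmbedding = Finset.Icc (n - 1 - p) (n - 1) := by
    ext m
    simp only [Fin.map_valEmbedding_Ici, Fin.val_rev, Finset.mem_Ico, Finset.mem_Icc]
    lia
  rw [tailSums, ← himage, Finset.sum_map]
  rfl

theorem lexLt_of_ofFn_lt {r : ℕ} {c e : Fin r → ℕ} (h : List.ofFn c < List.ofFn e) :
    lexLt c e := by
  obtain ⟨-, hlen⟩ | ⟨i, hi, _, heq, hlt⟩ := List.lt_iff_exists.mp h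
  · simp at hlen
  · rw [List.length_ofFn] at hi
    exact ⟨⟨i, hi⟩, fun s hs => by simpa using heq s hs, by simpa using hlt⟩

theorem ofFn_eq_append_replicate_zero {r : ℕ} (hr : n ≤ r) {c : Fin r → ℕ}
    (hc : ∀ k : Fin r, n ≤ (k : ℕ) → c k = 0) :
    List.ofFn c = List.ofFn (fun i : Fin n => if h : (i : ℕ) < r then c ⟨i, h⟩ else 0) ++
      List.replicate (r - n) 0 := by
  refine List.ext_getElem (by simp [hr]) fun i hi _ => ?_
  rw [List.length_ofFn] at hi
  rw [List.getElem_append]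
  split_ifs with hin
  · simp [hi]
  · simpa using hc ⟨i, hi⟩ (by simpa using hin)

theorem exists_sum_of_mem_pbwSpan {ι A : Type*} [Ring A] [Algebra 𝔽 A] {E : ι → A}
    {T : ι → A ≃ₐ[𝔽] A} {w : List ι} {r : ℕ} (hr : w.length = r) {c : Fin r → ℕ} {x : A}
    (hx : x ∈ pbwSpan E T w {cs | List.ofFn c < cs}) :
    ∃ (s : Finset (Fin r → ℕ)) (ξ : (Fin r → ℕ) → 𝔽), (∀ e ∈ s, lexLt c e ∧ ξ e ∈ 𝒜) ∧
      x = ∑ e ∈ s, ξ e • pbwMonomial E T w (List.ofFn e) := by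
  subst hr
  have hsub : pbwMonomial E T w '' {cs ∈ {cs | List.ofFn c < cs} | cs.length = w.length} ⊆
      (fun e : Fin w.length → ℕ => pbwMonomial E T w (List.ofFn e)) '' {e | lexLt c e} := by
    rintro _ ⟨cs, ⟨hlt, hlen⟩, rfl⟩
    obtain ⟨e, rfl⟩ : ∃ e : Fin w.length → ℕ, List.ofFn e = cs :=
      hlen ▸ ⟨fun i => cs[i], List.ofFn_getElem⟩
    exact ⟨e, lexLt_of_ofFn_lt hlt, rfl⟩
  obtain ⟨ξ, hξ, rfl⟩ :=
    (Finsupp.mem_span_image_iff_linearCombination 𝒜).mp (Submodule.span_mono hsub hx)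
  exact ⟨ξ.support, fun e => ξ e, fun e he => ⟨hξ he, (ξ e).2⟩, rfl⟩

end Coordinates

end ChariXi

theorem chariXi_lemma23_typeA (n : ℕ) (hn : 0 < n)
    (T : Fin n → U n (aTypeA n) (fun _ => 1) ≃ₐ[𝔽] U n (aTypeA n) (fun _ => 1))
    (hT : IsBraid n (aTypeA n) (fun _ => 1) T)
    (c : Fin (jwordA n).length → ℕ)
    (hc : ∀ k : Fin (jwordA n).length, n ≤ (k : ℕ) → c k = 0) :
    (jwordA n).length = n * (n + 1) / 2 ∧
    -- the extension of `c` by zero to all of `ℕ`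
    ∀ cext : ℕ → ℕ,
      (cext = fun m => if h : m < (jwordA n).length then c ⟨m, h⟩ else 0) →
      ∃ (s : Finset (Fin (jwordA n).length → ℕ)) (ξ : (Fin (jwordA n).length → ℕ) → 𝔽),
        (∀ e ∈ s, lexLt c e ∧ ξ e ∈ 𝒜) ∧
        mono n (aTypeA n) (fun _ => 1) (List.finRange n)
            (List.ofFn fun p : Fin n =>
              ∑ m ∈ Finset.Icc (n - 1 - (p : ℕ)) (n - 1), cext m)
          = pbw n (aTypeA n) (fun _ => 1) T (iwordA n) (List.ofFn c)
            + ∑ e ∈ s, ξ e • pbw n (aTypeA n) (fun _ => 1) T (iwordA n) (List.ofFn e) := by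
  have hlen : (iwordA n).length = (jwordA n).length := length_iwordA n
  have htwo := two_mul_length_jwordA n
  refine ⟨by lia, ?_⟩
  rintro cext rfl
  set c' : Fin n → ℕ := fun i => if h : (i : ℕ) < (jwordA n).length then c ⟨i, h⟩ else 0
  have hc' : List.ofFn c = List.ofFn c' ++ List.replicate ((jwordA n).length - n) 0 :=
    ofFn_eq_append_replicate_zero (by nlinarith) hc
  have hsys := hT.isBraidSystem (isSimplyLaced_aTypeA n) (pathGraph_cliqueFree_three n)
  have h := hsys.orderedMonomial_tailSums_sub_mem_pbwSpan c' ((jwordA n).length - n)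
  rw [← hc'] at h
  obtain ⟨s, ξ, hs, hsum⟩ := exists_sum_of_mem_pbwSpan hlen h
  refine ⟨s, ξ, hs, ?_⟩
  simp only [pbw_eq_pbwMonomial]
  rw [← sub_eq_iff_eq_add', ← hsum, ← List.ofFn_id, mono_ofFn]
  simp only [← tailSums_eq_sum_Icc]
  rfl
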